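/- arXiv:1402.2763 — 2 statements merged into one kernel-verified Lean document; each statement's English description precedes it below -/
import Mathlib

section
/- Let Ψ : ℝⁿ → ℝ be C² on an open set U with Ψ(x) > 0 on U, let λ > 0, let Σ ∈ ℝ^{n×n} be symmetric, let f : ℝⁿ → ℝⁿ and q : ℝⁿ → ℝ be functions, and set V = -λ·log(Ψ). Then for each x ∈ U, the stationary nonlinear Hamilton–Jacobi–Bellman equation 0 = q(x) + ∇V(x)ᵀf(x) - (1/(2λ))·∇V(x)ᵀ Σ ∇V(x) + (1/2)·tr(Σ·∇²V(x)) holds at x if and only if the linear equation (1/λ)·q(x)·Ψ(x) = f(x)ᵀ∇Ψ(x) + (1/2)·tr(Σ·∇²Ψ(x)) holds at x. -/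
open Matrix

/-- The gradient of `Ψ : ℝⁿ → ℝ` at `x`, as a vector in `ℝⁿ`. -/
noncomputable def grad {n : ℕ} (Ψ : (Fin n → ℝ) → ℝ) (x : Fin n → ℝ) : Fin n → ℝ :=
  fun i => fderiv ℝ Ψ x (Pi.single i 1)

/-- The Hessian matrix of `Ψ : ℝⁿ → ℝ` at `x`. -/
noncomputable def hess {n : ℕ} (Ψ : (Fin n → ℝ) → ℝ) (x : Fin n → ℝ) :
    Matrix (Fin n) (Fin n) ℝ :=
  Matrix.of fun i j => fderiv ℝ (fun y => fderiv ℝ Ψ y (Pi.single j 1)) x (Pi.single i 1)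

theorem aux_grad {n : ℕ} (Ψ : (Fin n → ℝ) → ℝ) (lam : ℝ) (y : Fin n → ℝ)
    (hd : DifferentiableAt ℝ Ψ y) (hp : 0 < Ψ y) (v : Fin n → ℝ) :
    fderiv ℝ (fun y => -lam * Real.log (Ψ y)) y v = -lam * ((Ψ y)⁻¹ * fderiv ℝ Ψ y v) := by
  have h := (hd.hasFDerivAt.log hp.ne').const_mul (-lam)
  rw [h.fderiv]
  simp

theorem aux_hess {n : ℕ} (U : Set (Fin n → ℝ)) (hU : IsOpen U)
    (Ψ : (Fin n → ℝ) → ℝ) (hΨ : ContDiffOn ℝ 2 Ψ U)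
    (lam : ℝ) (hpos : ∀ x ∈ U, 0 < Ψ x) (x : Fin n → ℝ) (hx : x ∈ U) (v w : Fin n → ℝ) :
    fderiv ℝ (fun y => fderiv ℝ (fun y => -lam * Real.log (Ψ y)) y v) x w
      = -lam * (Ψ x)⁻¹ * fderiv ℝ (fun y => fderiv ℝ Ψ y v) x w
        + lam * (Ψ x)⁻¹ ^ 2 * (fderiv ℝ Ψ x w * fderiv ℝ Ψ x v) := by
  have hd : ∀ y ∈ U, DifferentiableAt ℝ Ψ y := fun y hy =>
    (hΨ.contDiffAt (hU.mem_nhds hy)).differentiableAt (by norm_num)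
  have he : (fun y => fderiv ℝ (fun y => -lam * Real.log (Ψ y)) y v) =ᶠ[nhds x]
      (fun y => -lam * ((Ψ y)⁻¹ * fderiv ℝ Ψ y v)) := by
    filter_upwards [hU.mem_nhds hx] with y hy
    exact aux_grad Ψ lam y (hd y hy) (hpos y hy) v
  rw [he.fderiv_eq]
  have h2 : DifferentiableAt ℝ (fderiv ℝ Ψ) x :=
    ((hΨ.contDiffAt (hU.mem_nhds hx)).fderiv_right (m := 1) (by norm_num)).differentiableAt
      (by norm_num)
  have h3 : DifferentiableAt ℝ (fun y => fderiv ℝ Ψ y v) x :=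
    h2.clm_apply (differentiableAt_const v)
  have hp := (hpos x hx).ne'
  have h4 : HasFDerivAt (fun y => (Ψ y)⁻¹) (-((Ψ x) ^ 2)⁻¹ • fderiv ℝ Ψ x) x :=
    (hasDerivAt_inv hp).comp_hasFDerivAt x (hd x hx).hasFDerivAt
  have h5 := (h4.mul h3.hasFDerivAt).const_mul (-lam)
  have h6 := h5.fderiv
  simp only [Pi.mul_def] at h6
  rw [h6]
  simp
  ring

/-- with `V = -λ log Ψ` (Ψ C² and positive on the open set U, λ > 0,
Σ symmetric), at each `x ∈ U` the stationary nonlinear HJB equation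
`0 = q + ∇Vᵀf - (1/(2λ))∇VᵀΣ∇V + (1/2)tr(Σ∇²V)` holds iff the linear equation
`(1/λ)qΨ = fᵀ∇Ψ + (1/2)tr(Σ∇²Ψ)` holds. -/
theorem stmt3 {n : ℕ} (U : Set (Fin n → ℝ)) (hU : IsOpen U)
    (Ψ : (Fin n → ℝ) → ℝ) (hΨ : ContDiffOn ℝ 2 Ψ U)
    (lam : ℝ) (hlam : 0 < lam) (hpos : ∀ x ∈ U, 0 < Ψ x)
    (Sg : Matrix (Fin n) (Fin n) ℝ) (hSg : Sg.IsSymm)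
    (f : (Fin n → ℝ) → (Fin n → ℝ)) (q : (Fin n → ℝ) → ℝ) :
    let V : (Fin n → ℝ) → ℝ := fun y => -lam * Real.log (Ψ y)
    ∀ x ∈ U,
      (0 = q x + grad V x ⬝ᵥ f x
            - (1 / (2 * lam)) * (grad V x ⬝ᵥ Sg.mulVec (grad V x))
            + (1 / 2) * (Sg * hess V x).trace)
      ↔ ((1 / lam) * q x * Ψ x
            = f x ⬝ᵥ grad Ψ x + (1 / 2) * (Sg * hess Ψ x).trace) := by
  intro V x hx
  have hd : DifferentiableAt ℝ Ψ x :=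
    (hΨ.contDiffAt (hU.mem_nhds hx)).differentiableAt (by norm_num)
  have hp := hpos x hx
  have hg : grad V x = (-lam * (Ψ x)⁻¹) • grad Ψ x := by
    ext i
    simp only [grad, V, Pi.smul_apply, smul_eq_mul]
    rw [aux_grad Ψ lam x hd hp]
    ring
  have hh : hess V x = (-lam * (Ψ x)⁻¹) • hess Ψ x
      + (lam * (Ψ x)⁻¹ ^ 2) • vecMulVec (grad Ψ x) (grad Ψ x) := by
    ext i j
    simp only [hess, V, Matrix.of_apply, Matrix.add_apply, Matrix.smul_apply, smul_eq_mul,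
      vecMulVec_apply, grad]
    exact aux_hess U hU Ψ hΨ lam hpos x hx _ _
  have ht : (Sg * vecMulVec (grad Ψ x) (grad Ψ x)).trace
      = grad Ψ x ⬝ᵥ Sg.mulVec (grad Ψ x) := by
    rw [mul_vecMulVec, trace_vecMulVec, dotProduct_comm]
  rw [hg, hh, Matrix.mul_add, Matrix.mul_smul, Matrix.mul_smul, trace_add, trace_smul, trace_smul,
    ht, mulVec_smul, smul_dotProduct, smul_dotProduct, dotProduct_smul,
    dotProduct_comm (grad Ψ x) (f x)]
  simp only [smul_eq_mul]
  generalize grad Ψ x ⬝ᵥ Sg.mulVec (grad Ψ x) = a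
  generalize f x ⬝ᵥ grad Ψ x = b
  generalize (Sg * hess Ψ x).trace = c
  generalize Ψ x = p at hp
  generalize q x = r
  have key : r + -lam * p⁻¹ * b - 1 / (2 * lam) * (-lam * p⁻¹ * (-lam * p⁻¹ * a))
      + 1 / 2 * (-lam * p⁻¹ * c + lam * p⁻¹ ^ 2 * a)
      = lam * p⁻¹ * (1 / lam * r * p - (b + 1 / 2 * c)) := by
    field_simp
    ring
  rw [key, eq_comm, mul_eq_zero, sub_eq_zero]
  have : lam * p⁻¹ ≠ 0 := by positivity
  simp only [this, false_or]
end

section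
/- (Stengle's Positivstellensatz) Let f₁,…,f_m and h₁,…,h_p be polynomials in ℝ[x₁,…,xₙ]. The set X = { x ∈ ℝⁿ : fᵢ(x) ≥ 0 for all i = 1,…,m and hⱼ(x) = 0 for all j = 1,…,p } is empty if and only if there exist polynomials t₁,…,t_p ∈ ℝ[x₁,…,xₙ] and, for every subset A ⊆ {1,…,m}, a polynomial s_A ∈ ℝ[x₁,…,xₙ] that is a sum of squares of polynomials, such that -1 = Σⱼ tⱼ·hⱼ + Σ_{A ⊆ {1,…,m}} s_A · ∏_{i ∈ A} fᵢ. -/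
/-- A polynomial is a sum of squares if it is a finite sum of squares of
polynomials. -/
def IsSOS {n : ℕ} (p : MvPolynomial (Fin n) ℝ) : Prop :=
  ∃ (k : ℕ) (g : Fin k → MvPolynomial (Fin n) ℝ), p = ∑ i, (g i) ^ 2

section Helpers


open Polynomial

set_option linter.unusedSectionVars false

/-- The intermediate value property for polynomials over an ordered field. -/
def PolyIVP (R : Type*) [Field R] [LinearOrder R] : Prop :=
  ∀ (p : R[X]) (a b : R), a < b → p.eval a * p.eval b < 0 → ∃ c, a < c ∧ c < b ∧ p.eval c = 0

section OneField

variable {R : Type*} [Field R] [LinearOrder R] [IsStrictOrderedRing R]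

/-- A polynomial with positive derivative on a closed interval increases. -/
theorem ivp_lt_of_deriv_pos (hR : PolyIVP R) (p : R[X]) {a b : R} (hab : a < b)
    (hd : ∀ x, a ≤ x → x ≤ b → 0 < (derivative p).eval x) : p.eval a < p.eval b := by
  obtain ⟨k, hk⟩ := Polynomial.dvd_iff_isRoot.2
    (show (p - C (p.eval a)).IsRoot a by simp)
  have hp : p = (X - C a) * k + C (p.eval a) := by rw [← hk]; ring
  have hval : ∀ x, p.eval x = (x - a) * k.eval x + p.eval a := by
    intro x
    conv_lhs => rw [hp]
    simp
  have hder : ∀ x, (derivative p).eval x = k.eval x + (x - a) * (derivative k).eval x := by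
    intro x
    conv_lhs => rw [hp]
    simp
  have hka : 0 < k.eval a := by
    have := hd a le_rfl hab.le
    rw [hder] at this
    simpa using this
  by_contra hcon
  have hkb : k.eval b ≤ 0 := by
    by_contra h
    push Not at h
    have := mul_pos (sub_pos.2 hab) h
    have := hval b
    linarith
  have hk0 : k ≠ 0 := by rintro rfl; simp at hka
  let S := k.roots.toFinset.filter (fun c => a < c ∧ c ≤ b)
  have hS : S.Nonempty := by
    rcases hkb.lt_or_eq with h | h
    · obtain ⟨c, h1, h2, h3⟩ := hR k a b hab (mul_neg_of_pos_of_neg hka h)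
      exact ⟨c, by simp [S, hk0, h1, h2.le, h3]⟩
    · exact ⟨b, by simp [S, hk0, hab, h]⟩
  obtain ⟨c, hcS, hmin⟩ := S.exists_minimal hS
  have hc : k.eval c = 0 ∧ a < c ∧ c ≤ b := by simpa [S, hk0] using hcS
  obtain ⟨hc0, hac, hcb⟩ := hc
  have hno : ∀ x, a < x → x < c → k.eval x ≠ 0 := by
    intro x h1 h2 h3
    have : c ≤ x := hmin (by simp [S, hk0, h1, h3, (h2.le.trans hcb)]) h2.le
    linarith
  have hpos : ∀ x, a < x → x < c → 0 < k.eval x := by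
    intro x h1 h2
    by_contra h
    obtain ⟨y, h3, h4, h5⟩ := hR k a x h1
      (mul_neg_of_pos_of_neg hka (lt_of_le_of_ne (not_lt.1 h) (hno x h1 h2)))
    exact hno y h3 (h4.trans h2) h5
  obtain ⟨h, hh⟩ := Polynomial.dvd_iff_isRoot.2 (show k.IsRoot c from hc0)
  have hdk : (derivative k).eval c = h.eval c := by rw [hh]; simp
  have hhc : 0 < h.eval c := by
    have := hd c hac.le hcb
    rw [hder, hc0, zero_add, hdk] at this
    exact (mul_pos_iff_of_pos_left (sub_pos.2 hac)).1 this
  set x := (a + c) / 2 with hx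
  have hax : a < x := by rw [hx]; linarith
  have hxc : x < c := by rw [hx]; linarith
  have hhx : h.eval x < 0 := by
    have := hpos x hax hxc
    rw [hh] at this
    simp only [eval_mul, eval_sub, eval_X, eval_C] at this
    by_contra h'
    have := mul_nonneg (not_lt.1 h') (sub_nonneg.2 hxc.le)
    nlinarith
  obtain ⟨y, h1, h2, h3⟩ := hR h x c hxc (mul_neg_of_neg_of_pos hhx hhc)
  exact hno y (hax.trans h1) h2 (by rw [hh]; simp [h3])

theorem poly_pos_at_top (p : R[X]) (hp : 0 < p.leadingCoeff) :
    ∃ ε > 0, ∃ M, ∀ x, M ≤ x → ε ≤ p.eval x := by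
  induction hn : p.natDegree generalizing p with
  | zero =>
    obtain ⟨c, rfl⟩ := natDegree_eq_zero.1 hn
    exact ⟨c, by simpa using hp, 0, fun x _ => by simp⟩
  | succ n ih =>
    have hdeg : p.divX.natDegree = n := by rw [natDegree_divX_eq_natDegree_tsub_one, hn]; rfl
    have hlc : p.divX.leadingCoeff = p.leadingCoeff := by
      rw [leadingCoeff, hdeg, coeff_divX, leadingCoeff, hn]
    obtain ⟨ε, hε, M, hM⟩ := ih p.divX (hlc ▸ hp) hdeg
    refine ⟨1, one_pos, max (max M 0) ((|p.coeff 0| + 1) / ε), fun x hx => ?_⟩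
    have h1 : M ≤ x := (le_max_left _ _).trans ((le_max_left _ _).trans hx)
    have h0 : 0 ≤ x := (le_max_right _ _).trans ((le_max_left _ _).trans hx)
    have h2 : (|p.coeff 0| + 1) / ε ≤ x := (le_max_right _ _).trans hx
    have h3 := hM x h1
    rw [div_le_iff₀ hε] at h2
    have h4 : p.eval x = p.divX.eval x * x + p.coeff 0 := by
      conv_lhs => rw [← divX_mul_X_add p]
      simp
    have h5 := mul_le_mul_of_nonneg_right h3 h0
    have h6 := neg_abs_le (p.coeff 0)
    rw [h4]
    linarith

theorem poly_unbounded_at_top (p : R[X]) (hp : 0 < p.leadingCoeff) (hn : 0 < p.natDegree) (B : R) :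
    ∃ M, ∀ x, M ≤ x → B < p.eval x := by
  have : (p - C B).leadingCoeff = p.leadingCoeff :=
    leadingCoeff_sub_of_degree_lt (lt_of_le_of_lt degree_C_le (natDegree_pos_iff_degree_pos.1 hn))
  obtain ⟨ε, hε, M, hM⟩ := poly_pos_at_top (p - C B) (this ▸ hp)
  refine ⟨M, fun x hx => ?_⟩
  have := hM x hx
  simp at this
  linarith

/-- A nonconstant polynomial increasing on an upward unbounded ray takes positive values there. -/
theorem poly_exists_pos (p : R[X]) (hn : 0 < p.natDegree) (c : R)
    (hmono : ∀ x y, c ≤ x → x < y → p.eval x < p.eval y) : ∃ x, c ≤ x ∧ 0 < p.eval x := by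
  rcases lt_trichotomy p.leadingCoeff 0 with h | h | h
  · obtain ⟨M, hM⟩ := poly_unbounded_at_top (-p) (by simpa using h) (by simpa using hn) (-p.eval c)
    have h1 := hM (max M (c + 1)) (le_max_left _ _)
    have h2 := hmono c (max M (c + 1)) le_rfl (lt_of_lt_of_le (by linarith) (le_max_right _ _))
    simp at h1
    linarith
  · rw [leadingCoeff_eq_zero] at h
    simp [h] at hn
  · obtain ⟨M, hM⟩ := poly_unbounded_at_top p h hn 0
    exact ⟨max M c, le_max_right _ _, hM _ (le_max_left _ _)⟩

/-- Existence of positive values on an open cell cut out by finitely many points. -/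
theorem cell_pos_iff (hR : PolyIVP R) (p : R[X]) (hn : 0 < p.natDegree) (lo hi : Finset R)
    (x : R) (hlx : ∀ a ∈ lo, a < x) (hxh : ∀ b ∈ hi, x < b)
    (hd : ∀ z, (∀ a ∈ lo, a < z) → (∀ b ∈ hi, z < b) → 0 < (derivative p).eval z) :
    (∃ z, (∀ a ∈ lo, a < z) ∧ (∀ b ∈ hi, z < b) ∧ 0 < p.eval z) ↔
      ∀ b ∈ hi, (∀ b' ∈ hi, b ≤ b') → 0 < p.eval b := by
  have hmono : ∀ z w, (∀ a ∈ lo, a < z) → (∀ b ∈ hi, w < b) → z < w → p.eval z < p.eval w :=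
    fun z w hz hw hzw => ivp_lt_of_deriv_pos hR p hzw fun y h1 h2 =>
      hd y (fun a ha => (hz a ha).trans_le h1) (fun b hb => h2.trans_lt (hw b hb))
  constructor
  · rintro ⟨z, hz1, hz2, hz⟩ b hb hbmin
    by_contra hcon
    obtain ⟨y, h1, h2, h3⟩ := hR (p - C (p.eval z / 2)) z b (hz2 b hb) (by
      apply mul_neg_of_pos_of_neg <;> simp <;> linarith)
    have := hmono z y hz1 (fun b' hb' => h2.trans_le (hbmin b' hb')) h1
    simp at h3
    linarith
  · intro h
    rcases hi.eq_empty_or_nonempty with rfl | hne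
    · obtain ⟨z, hz, hz'⟩ := poly_exists_pos p hn x
        (fun y w hy hyw => hmono y w (fun a ha => (hlx a ha).trans_le hy) (by simp) hyw)
      exact ⟨z, fun a ha => (hlx a ha).trans_le hz, by simp, hz'⟩
    · have hbm := hi.min'_mem hne
      have hble : ∀ b' ∈ hi, hi.min' hne ≤ b' := fun b' hb' => hi.min'_le b' hb'
      set b := hi.min' hne
      have hb := h b hbm hble
      have hxb := hxh b hbm
      rcases lt_trichotomy (p.eval x) 0 with h0 | h0 | h0
      · obtain ⟨c, h1, h2, h3⟩ := hR p x b hxb (mul_neg_of_neg_of_pos h0 hb)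
        refine ⟨(c + b) / 2, fun a ha => (hlx a ha).trans (by linarith),
          fun b' hb' => lt_of_lt_of_le (by linarith) (hble b' hb'), ?_⟩
        rw [← h3]
        exact hmono _ _ (fun a ha => (hlx a ha).trans h1)
          (fun b' hb' => lt_of_lt_of_le (by linarith) (hble b' hb')) (by linarith)
      · refine ⟨(x + b) / 2, fun a ha => (hlx a ha).trans (by linarith),
          fun b' hb' => lt_of_lt_of_le (by linarith) (hble b' hb'), ?_⟩
        rw [← h0]
        exact hmono _ _ hlx
          (fun b' hb' => lt_of_lt_of_le (by linarith) (hble b' hb')) (by linarith)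
      · exact ⟨x, hlx, hxh, h0⟩

/-- Existence of negative values on an open cell cut out by finitely many points. -/
theorem cell_neg_iff (hR : PolyIVP R) (p : R[X]) (hn : 0 < p.natDegree) (lo hi : Finset R)
    (x : R) (hlx : ∀ a ∈ lo, a < x) (hxh : ∀ b ∈ hi, x < b)
    (hd : ∀ z, (∀ a ∈ lo, a < z) → (∀ b ∈ hi, z < b) → 0 < (derivative p).eval z) :
    (∃ z, (∀ a ∈ lo, a < z) ∧ (∀ b ∈ hi, z < b) ∧ p.eval z < 0) ↔
      ∀ b ∈ lo, (∀ b' ∈ lo, b' ≤ b) → p.eval b < 0 := by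
  have key := cell_pos_iff hR (-(p.comp (-X))) (by simpa [natDegree_comp] using hn)
    (hi.image (fun z => -z)) (lo.image (fun z => -z)) (-x) (by simpa using hxh) (by simpa using hlx)
    (by
      intro z h1 h2
      have := hd (-z) (fun a ha => by
          have := h2 (-a) (Finset.mem_image_of_mem _ ha); linarith)
        (fun b hb => by have := h1 (-b) (Finset.mem_image_of_mem _ hb); linarith)
      simpa [derivative_comp] using this)
  constructor
  · rintro ⟨z, h1, h2, h3⟩ b hb hb'
    have := key.1 ⟨-z, by simpa using h2, by simpa using h1, by simpa using h3⟩ (-b)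
      (Finset.mem_image_of_mem _ hb) (by simpa using hb')
    simpa using this
  · intro h
    obtain ⟨z, h1, h2, h3⟩ := key.2 (by simpa using h)
    refine ⟨-z, fun a ha => ?_, fun b hb => ?_, by simpa using h3⟩
    · have := h2 (-a) (Finset.mem_image_of_mem _ ha); linarith
    · have := h1 (-b) (Finset.mem_image_of_mem _ hb); linarith

end OneField

section TwoFields

variable {R S : Type*} [Field R] [LinearOrder R] [IsStrictOrderedRing R]
  [Field S] [LinearOrder S] [IsStrictOrderedRing S]

/-- Two points are at the same position with respect to a finite table of pairs. -/
def SamePos (T : Finset (R × S)) (x : R) (y : S) : Prop :=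
  ∀ t ∈ T, (x < t.1 ↔ y < t.2) ∧ (t.1 < x ↔ t.2 < y)

/-- The table is an order isomorphism between its projections. -/
def MonoTable (T : Finset (R × S)) : Prop :=
  ∀ s ∈ T, SamePos T s.1 s.2

theorem exists_samePos (T : Finset (R × S)) (hT : MonoTable T) (x : R) :
    ∃ y, SamePos T x y := by
  classical
  by_cases hx : ∃ t ∈ T, t.1 = x
  · obtain ⟨t, ht, rfl⟩ := hx
    exact ⟨t.2, hT t ht⟩
  · push Not at hx
    obtain ⟨y, h1, h2⟩ := Order.exists_between_finsets
      ((T.filter (fun t => t.1 < x)).image Prod.snd)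
      ((T.filter (fun t => x < t.1)).image Prod.snd) (by
        intro a ha b hb
        simp only [Finset.mem_image, Finset.mem_filter] at ha hb
        obtain ⟨s, ⟨hs, hsx⟩, rfl⟩ := ha
        obtain ⟨t, ⟨ht, htx⟩, rfl⟩ := hb
        exact ((hT s hs t ht).1).1 (hsx.trans htx))
    refine ⟨y, fun t ht => ?_⟩
    rcases lt_or_gt_of_ne (hx t ht) with h | h
    · have := h1 t.2 (Finset.mem_image_of_mem _ (Finset.mem_filter.2 ⟨ht, h⟩))
      exact ⟨⟨fun h' => absurd h' h.not_gt, fun h' => absurd h' this.not_gt⟩,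
        ⟨fun _ => this, fun _ => h⟩⟩
    · have := h2 t.2 (Finset.mem_image_of_mem _ (Finset.mem_filter.2 ⟨ht, h⟩))
      exact ⟨⟨fun _ => this, fun _ => h⟩,
        ⟨fun h' => absurd h' h.not_gt, fun h' => absurd h' this.not_gt⟩⟩

theorem SamePos.cross {T : Finset (R × S)} {x z : R} {y w : S} (h1 : SamePos T x y)
    (h2 : SamePos T z y) (h3 : SamePos T x w) : SamePos T z w := fun t ht =>
  ⟨((h2 t ht).1.trans (h1 t ht).1.symm).trans (h3 t ht).1,
    ((h2 t ht).2.trans (h1 t ht).2.symm).trans (h3 t ht).2⟩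

theorem SamePos.eq_iff {T : Finset (R × S)} {x : R} {y : S} (h : SamePos T x y)
    {t : R × S} (ht : t ∈ T) : x = t.1 ↔ y = t.2 := by
  have := h t ht
  constructor
  · rintro rfl
    exact le_antisymm (not_lt.1 (this.2.not.1 (lt_irrefl _))) (not_lt.1 (this.1.not.1 (lt_irrefl _)))
  · rintro rfl
    exact le_antisymm (not_lt.1 (this.2.not.2 (lt_irrefl _))) (not_lt.1 (this.1.not.2 (lt_irrefl _)))

/-- Sign agreement on an open cell, increasing case. -/
theorem cell_sign_pos (hR : PolyIVP R) (hS : PolyIVP S) (T : Finset (R × S)) (hT : MonoTable T)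
    (P : R[X]) (Q : S[X]) (hP : 0 < P.natDegree) (hQ : 0 < Q.natDegree)
    (hd : ∀ x y, SamePos T x y →
      SignType.sign ((derivative P).eval x) = SignType.sign ((derivative Q).eval y))
    (hPQ : ∀ t ∈ T, SignType.sign (P.eval t.1) = SignType.sign (Q.eval t.2))
    (x : R) (y : S) (hxy : SamePos T x y) (hopen : ∀ t ∈ T, t.1 ≠ x)
    (hpos : 0 < (derivative P).eval x)
    (hroot : ∀ u v, SamePos T u v → P.eval u = 0 → Q.eval v = 0 →
      (x < u ↔ y < v) ∧ (u < x ↔ v < y)) :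
    SignType.sign (P.eval x) = SignType.sign (Q.eval y) := by
  classical
  have hopen' : ∀ t ∈ T, t.2 ≠ y := fun t ht h => hopen t ht ((hxy.eq_iff ht).2 h.symm).symm
  have hposS : 0 < (derivative Q).eval y := by
    rw [← sign_eq_one_iff, ← hd x y hxy, sign_eq_one_iff]; exact hpos
  let Tl := T.filter (fun t => t.1 < x)
  let Th := T.filter (fun t => x < t.1)
  have hmemR : ∀ z, ((∀ a ∈ Tl.image Prod.fst, a < z) ∧ (∀ b ∈ Th.image Prod.fst, z < b)) ↔
      SamePos T z y := by
    intro z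
    constructor
    · rintro ⟨h1, h2⟩ t ht
      rw [← (hxy t ht).1, ← (hxy t ht).2]
      rcases lt_or_gt_of_ne (hopen t ht) with h | h
      · have := h1 t.1 (Finset.mem_image_of_mem _ (Finset.mem_filter.2 ⟨ht, h⟩))
        simp [h, this, h.not_gt, this.not_gt]
      · have := h2 t.1 (Finset.mem_image_of_mem _ (Finset.mem_filter.2 ⟨ht, h⟩))
        simp [h, this, h.not_gt, this.not_gt]
    · intro h
      constructor
      · intro a ha
        obtain ⟨t, ht, rfl⟩ := Finset.mem_image.1 ha
        obtain ⟨ht, htx⟩ := Finset.mem_filter.1 ht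
        rw [(h t ht).2, ← (hxy t ht).2]; exact htx
      · intro a ha
        obtain ⟨t, ht, rfl⟩ := Finset.mem_image.1 ha
        obtain ⟨ht, htx⟩ := Finset.mem_filter.1 ht
        rw [(h t ht).1, ← (hxy t ht).1]; exact htx
  have hmemS : ∀ w, ((∀ a ∈ Tl.image Prod.snd, a < w) ∧ (∀ b ∈ Th.image Prod.snd, w < b)) ↔
      SamePos T x w := by
    intro z
    constructor
    · rintro ⟨h1, h2⟩ t ht
      rcases lt_or_gt_of_ne (hopen t ht) with h | h
      · have := h1 t.2 (Finset.mem_image_of_mem _ (Finset.mem_filter.2 ⟨ht, h⟩))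
        simp [h, this, h.not_gt, this.not_gt]
      · have := h2 t.2 (Finset.mem_image_of_mem _ (Finset.mem_filter.2 ⟨ht, h⟩))
        simp [h, this, h.not_gt, this.not_gt]
    · intro h
      constructor
      · intro a ha
        obtain ⟨t, ht, rfl⟩ := Finset.mem_image.1 ha
        obtain ⟨ht, htx⟩ := Finset.mem_filter.1 ht
        rw [← (h t ht).2]; exact htx
      · intro a ha
        obtain ⟨t, ht, rfl⟩ := Finset.mem_image.1 ha
        obtain ⟨ht, htx⟩ := Finset.mem_filter.1 ht
        rw [← (h t ht).1]; exact htx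
  have hdR : ∀ z, SamePos T z y → 0 < (derivative P).eval z := fun z hz => by
    rw [← sign_eq_one_iff, hd z y hz, sign_eq_one_iff]; exact hposS
  have hdS : ∀ w, SamePos T x w → 0 < (derivative Q).eval w := fun w hw => by
    rw [← sign_eq_one_iff, ← hd x w hw, sign_eq_one_iff]; exact hpos
  have hxx := (hmemR x).2 hxy
  have hyy := (hmemS y).2 hxy
  have hmonoR : ∀ z w, SamePos T z y → SamePos T w y → z < w → P.eval z < P.eval w := by
    intro z w hz hw hzw
    refine ivp_lt_of_deriv_pos hR P hzw fun v h1 h2 => hdR v ((hmemR v).1 ?_)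
    exact ⟨fun a ha => (((hmemR z).2 hz).1 a ha).trans_le h1,
      fun b hb => h2.trans_lt (((hmemR w).2 hw).2 b hb)⟩
  have hmonoS : ∀ z w, SamePos T x z → SamePos T x w → z < w → Q.eval z < Q.eval w := by
    intro z w hz hw hzw
    refine ivp_lt_of_deriv_pos hS Q hzw fun v h1 h2 => hdS v ((hmemS v).1 ?_)
    exact ⟨fun a ha => (((hmemS z).2 hz).1 a ha).trans_le h1,
      fun b hb => h2.trans_lt (((hmemS w).2 hw).2 b hb)⟩
  have posR := cell_pos_iff hR P hP (Tl.image Prod.fst) (Th.image Prod.fst) x hxx.1 hxx.2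
    (fun z h1 h2 => hdR z ((hmemR z).1 ⟨h1, h2⟩))
  have negR := cell_neg_iff hR P hP (Tl.image Prod.fst) (Th.image Prod.fst) x hxx.1 hxx.2
    (fun z h1 h2 => hdR z ((hmemR z).1 ⟨h1, h2⟩))
  have posS := cell_pos_iff hS Q hQ (Tl.image Prod.snd) (Th.image Prod.snd) y hyy.1 hyy.2
    (fun z h1 h2 => hdS z ((hmemS z).1 ⟨h1, h2⟩))
  have negS := cell_neg_iff hS Q hQ (Tl.image Prod.snd) (Th.image Prod.snd) y hyy.1 hyy.2
    (fun z h1 h2 => hdS z ((hmemS z).1 ⟨h1, h2⟩))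
  have hle : ∀ s ∈ T, ∀ t ∈ T, s.1 ≤ t.1 ↔ s.2 ≤ t.2 := fun s hs t ht => by
    rw [← not_lt, ← not_lt, (hT s hs t ht).2]
  have hposT : ∀ t ∈ T, 0 < P.eval t.1 ↔ 0 < Q.eval t.2 := fun t ht => by
    rw [← sign_eq_one_iff, ← sign_eq_one_iff, hPQ t ht]
  have hnegT : ∀ t ∈ T, P.eval t.1 < 0 ↔ Q.eval t.2 < 0 := fun t ht => by
    rw [← sign_eq_neg_one_iff, ← sign_eq_neg_one_iff, hPQ t ht]
  have hTl : ∀ t ∈ Tl, t ∈ T := fun t ht => (Finset.mem_filter.1 ht).1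
  have hTh : ∀ t ∈ Th, t ∈ T := fun t ht => (Finset.mem_filter.1 ht).1
  have posRS : (∃ z, SamePos T z y ∧ 0 < P.eval z) ↔ (∃ w, SamePos T x w ∧ 0 < Q.eval w) := by
    simp only [← hmemR, ← hmemS, and_assoc]
    rw [posR, posS]
    simp only [Finset.forall_mem_image]
    constructor
    · intro h t ht hmin
      exact (hposT t (hTh t ht)).1 (h ht fun s hs => (hle t (hTh t ht) s (hTh s hs)).2 (hmin hs))
    · intro h t ht hmin
      exact (hposT t (hTh t ht)).2 (h ht fun s hs => (hle t (hTh t ht) s (hTh s hs)).1 (hmin hs))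
  have negRS : (∃ z, SamePos T z y ∧ P.eval z < 0) ↔ (∃ w, SamePos T x w ∧ Q.eval w < 0) := by
    simp only [← hmemR, ← hmemS, and_assoc]
    rw [negR, negS]
    simp only [Finset.forall_mem_image]
    constructor
    · intro h t ht hmin
      exact (hnegT t (hTl t ht)).1 (h ht fun s hs => (hle s (hTl s hs) t (hTl t ht)).2 (hmin hs))
    · intro h t ht hmin
      exact (hnegT t (hTl t ht)).2 (h ht fun s hs => (hle s (hTl s hs) t (hTl t ht)).1 (hmin hs))
  -- points slightly to the left or right inside the cells
  have stepR : ∀ z, SamePos T z y →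
      (∃ z' < z, SamePos T z' y) ∧ (∃ z' > z, SamePos T z' y) := by
    intro z hz
    have hz' := (hmemR z).2 hz
    constructor
    · obtain ⟨w, h1, h2⟩ := Order.exists_between_finsets (Tl.image Prod.fst) {z}
        (by simpa using hz'.1)
      have h2 : w < z := by simpa using h2
      exact ⟨w, h2, (hmemR w).1 ⟨h1, fun b hb => h2.trans (hz'.2 b hb)⟩⟩
    · obtain ⟨w, h1, h2⟩ := Order.exists_between_finsets {z} (Th.image Prod.fst)
        (by simpa using hz'.2)
      have h1 : z < w := by simpa using h1
      exact ⟨w, h1, (hmemR w).1 ⟨fun b hb => (hz'.1 b hb).trans h1, h2⟩⟩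
  have stepS : ∀ z, SamePos T x z →
      (∃ z' < z, SamePos T x z') ∧ (∃ z' > z, SamePos T x z') := by
    intro z hz
    have hz' := (hmemS z).2 hz
    constructor
    · obtain ⟨w, h1, h2⟩ := Order.exists_between_finsets (Tl.image Prod.snd) {z}
        (by simpa using hz'.1)
      have h2 : w < z := by simpa using h2
      exact ⟨w, h2, (hmemS w).1 ⟨h1, fun b hb => h2.trans (hz'.2 b hb)⟩⟩
    · obtain ⟨w, h1, h2⟩ := Order.exists_between_finsets {z} (Th.image Prod.snd)
        (by simpa using hz'.2)
      have h1 : z < w := by simpa using h1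
      exact ⟨w, h1, (hmemS w).1 ⟨fun b hb => (hz'.1 b hb).trans h1, h2⟩⟩
  by_cases hneg : ∃ z, SamePos T z y ∧ P.eval z < 0
  · by_cases hps : ∃ z, SamePos T z y ∧ 0 < P.eval z
    · obtain ⟨b1, hb1, hb1'⟩ := hps
      obtain ⟨b2, hb2, hb2'⟩ := posRS.1 ⟨b1, hb1, hb1'⟩
      obtain ⟨a1, ha1, ha1'⟩ := hneg
      obtain ⟨a2, ha2, ha2'⟩ := negRS.1 ⟨a1, ha1, ha1'⟩
      have hab1 : a1 < b1 := by
        by_contra h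
        rcases (not_lt.1 h).lt_or_eq with h | h
        · have := hmonoR b1 a1 hb1 ha1 h; linarith
        · rw [h] at hb1'; linarith
      have hab2 : a2 < b2 := by
        by_contra h
        rcases (not_lt.1 h).lt_or_eq with h | h
        · have := hmonoS b2 a2 hb2 ha2 h; linarith
        · rw [h] at hb2'; linarith
      obtain ⟨u, hu1, hu2, hu⟩ := hR P a1 b1 hab1 (mul_neg_of_neg_of_pos ha1' hb1')
      obtain ⟨v, hv1, hv2, hv⟩ := hS Q a2 b2 hab2 (mul_neg_of_neg_of_pos ha2' hb2')
      have huc : SamePos T u y := (hmemR u).1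
        ⟨fun a ha => (((hmemR a1).2 ha1).1 a ha).trans hu1,
          fun b hb => hu2.trans (((hmemR b1).2 hb1).2 b hb)⟩
      have hvc : SamePos T x v := (hmemS v).1
        ⟨fun a ha => (((hmemS a2).2 ha2).1 a ha).trans hv1,
          fun b hb => hv2.trans (((hmemS b2).2 hb2).2 b hb)⟩
      have := hroot u v (hxy.cross huc hvc) hu hv
      rcases lt_trichotomy x u with h | h | h
      · have h' := this.1.1 h
        have e1 := hmonoR x u hxy huc h
        have e2 := hmonoS y v hxy hvc h'
        rw [hu] at e1; rw [hv] at e2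
        rw [sign_neg e1, sign_neg e2]
      · have h' : y = v := le_antisymm
          (not_lt.1 (this.2.not.1 (by rw [h]; exact lt_irrefl _)))
          (not_lt.1 (this.1.not.1 (by rw [h]; exact lt_irrefl _)))
        rw [h, h', hu, hv, sign_zero, sign_zero]
      · have h' := this.2.1 h
        have e1 := hmonoR u x huc hxy h
        have e2 := hmonoS v y hvc hxy h'
        rw [hu] at e1; rw [hv] at e2
        rw [sign_pos e1, sign_pos e2]
    · have hps' := fun h => hps (posRS.2 h)
      have e1 : P.eval x < 0 := by
        obtain ⟨z, hz, hz'⟩ := (stepR x hxy).2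
        have := hmonoR x z hxy hz' hz
        by_contra h
        exact hps ⟨z, hz', (not_lt.1 h).trans_lt this⟩
      have e2 : Q.eval y < 0 := by
        obtain ⟨z, hz, hz'⟩ := (stepS y hxy).2
        have := hmonoS y z hxy hz' hz
        by_contra h
        exact hps' ⟨z, hz', (not_lt.1 h).trans_lt this⟩
      rw [sign_neg e1, sign_neg e2]
  · have hneg' := fun h => hneg (negRS.2 h)
    have e1 : 0 < P.eval x := by
      obtain ⟨z, hz, hz'⟩ := (stepR x hxy).1
      have := hmonoR z x hz' hxy hz
      by_contra h
      exact hneg ⟨z, hz', this.trans_le (not_lt.1 h)⟩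
    have e2 : 0 < Q.eval y := by
      obtain ⟨z, hz, hz'⟩ := (stepS y hxy).1
      have := hmonoS z y hz' hxy hz
      by_contra h
      exact hneg' ⟨z, hz', this.trans_le (not_lt.1 h)⟩
    rw [sign_pos e1, sign_pos e2]

/-- On an open cell the derivative does not vanish. -/
theorem cell_deriv_ne (T : Finset (R × S))
    (P : R[X]) (Q : S[X]) (hP : 0 < P.natDegree)
    (hd : ∀ x y, SamePos T x y →
      SignType.sign ((derivative P).eval x) = SignType.sign ((derivative Q).eval y))
    (x : R) (y : S) (hxy : SamePos T x y) (hopen : ∀ t ∈ T, t.1 ≠ x) :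
    (derivative P).eval x ≠ 0 := by
  classical
  intro h0
  have hy0 : (derivative Q).eval y = 0 := by
    rw [← sign_eq_zero_iff, ← hd x y hxy, h0, sign_zero]
  obtain ⟨w, h1, h2⟩ := Order.exists_between_finsets {x} ((T.filter (fun t => x < t.1)).image Prod.fst)
        (by simp +contextual)
  have h1 : x < w := by simpa using h1
  have hcell : ∀ z ∈ Set.Ioo x w, (derivative P).eval z = 0 := by
    intro z hz
    have hzy : SamePos T z y := by
      intro t ht
      rw [← (hxy t ht).1, ← (hxy t ht).2]
      rcases lt_or_gt_of_ne (hopen t ht) with h | h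
      · have := h.trans hz.1
        simp [h, this, h.not_gt, this.not_gt]
      · have := hz.2.trans (h2 t.1 (Finset.mem_image_of_mem _ (Finset.mem_filter.2 ⟨ht, h⟩)))
        simp [h, this, h.not_gt, this.not_gt]
    rw [← sign_eq_zero_iff, hd z y hzy, hy0, sign_zero]
  have : derivative P = 0 := Polynomial.eq_zero_of_infinite_isRoot _
    ((Set.Ioo_infinite h1).mono hcell)
  have := Polynomial.derivative_eq_zero.1 this
  omega

/-- Roots of one polynomial in one open cell are unique. -/
theorem cell_root_unique (hR : PolyIVP R) (T : Finset (R × S))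
    (P : R[X]) (Q : S[X]) (hP : 0 < P.natDegree)
    (hd : ∀ x y, SamePos T x y →
      SignType.sign ((derivative P).eval x) = SignType.sign ((derivative Q).eval y))
    {u u' : R} {v' : S} (h2 : SamePos T u' v')
    (h3 : SamePos T u v') (hu : P.eval u = 0) (hu' : P.eval u' = 0) : ¬ u < u' := by
  intro hlt
  have hopen : ∀ t ∈ T, ∀ z, u ≤ z → z ≤ u' → t.1 ≠ z := by
    rintro t ht z hz1 hz2 rfl
    have e1 := h2 t ht
    have e2 := h3 t ht
    have a1 : ¬ t.1 < u := hz1.not_gt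
    have a2 : ¬ u' < t.1 := hz2.not_gt
    rw [e2.2] at a1
    rw [e1.1] at a2
    have a3 : v' = t.2 := le_antisymm (not_lt.1 a1) (not_lt.1 a2)
    have := (h2.eq_iff ht).2 a3
    have := (h3.eq_iff ht).2 a3
    linarith
  have hc : ∀ z, u ≤ z → z ≤ u' → SamePos T z v' := by
    intro z hz1 hz2 t ht
    have e1 := h2 t ht
    have e2 := h3 t ht
    rcases lt_or_gt_of_ne (hopen t ht u le_rfl hlt.le) with h | h
    · have h' := e2.2.1 h
      have := h.trans_le hz1
      simp [h', this, h'.not_gt, this.not_gt]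
    · have h' := e2.1.1 h
      have := hz2.trans_lt (e1.1.2 h')
      simp [h', this, h'.not_gt, this.not_gt]
  have hne := cell_deriv_ne T P Q hP hd u v' h3 (fun t ht => hopen t ht u le_rfl hlt.le)
  have hsg : ∀ z, u ≤ z → z ≤ u' → SignType.sign ((derivative P).eval z) =
      SignType.sign ((derivative P).eval u) := fun z h1 h2 => by
    rw [hd z v' (hc z h1 h2), ← hd u v' h3]
  rcases lt_or_gt_of_ne hne with h | h
  · have := ivp_lt_of_deriv_pos hR (-P) hlt (fun z h1 h2 => by
      have := hsg z h1 h2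
      rw [sign_neg h, sign_eq_neg_one_iff] at this
      simpa using this)
    simp [hu, hu'] at this
  · have := ivp_lt_of_deriv_pos hR P hlt (fun z h1 h2 => by
      have := hsg z h1 h2
      rw [sign_pos h, sign_eq_one_iff] at this
      simpa using this)
    simp [hu, hu'] at this

theorem new_roots_lt (hR : PolyIVP R) (T : Finset (R × S))
    (P : R[X]) (Q : S[X]) (hP : 0 < P.natDegree)
    (hd : ∀ x y, SamePos T x y →
      SignType.sign ((derivative P).eval x) = SignType.sign ((derivative Q).eval y))
    {u u' : R} {v v' : S} (h1 : SamePos T u v) (h2 : SamePos T u' v')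
    (hu : P.eval u = 0) (hu' : P.eval u' = 0) (hlt : u < u') : v < v' := by
  by_cases h3 : SamePos T u v'
  · exact absurd hlt (cell_root_unique hR T P Q hP hd h2 h3 hu hu')
  · unfold SamePos at h3
    push Not at h3
    obtain ⟨r, hr, h3⟩ := h3
    by_cases h4 : (u < r.1 ↔ v' < r.2)
    · have h5 : ¬ (r.1 < u ↔ r.2 < v') := fun h5 => by
        rcases h3 h4 with h | h
        · exact h.2.not_gt (h5.1 h.1) |>.elim
        · exact absurd (h5.2 h.2) (not_lt.2 h.1)
      rw [← (h2 r hr).2] at h5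
      have h6 : r.1 < u' := by
        by_contra h6
        exact h5 ⟨fun h => h.trans hlt, fun h => absurd h h6⟩
      have h7 : ¬ r.1 < u := fun h7 => h5 ⟨fun _ => h6, fun _ => h7⟩
      rw [(h1 r hr).2] at h7
      exact (not_lt.1 h7).trans_lt ((h2 r hr).2.1 h6)
    · rw [← (h2 r hr).1] at h4
      have h6 : u < r.1 := by
        by_contra h6
        exact h4 ⟨fun h => absurd h h6, fun h => hlt.trans h⟩
      have h7 : ¬ u' < r.1 := fun h7 => h4 ⟨fun _ => h7, fun _ => h6⟩
      rw [(h2 r hr).1] at h7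
      exact ((h1 r hr).1.1 h6).trans_le (not_lt.1 h7)

theorem samePos_swap [DecidableEq R] [DecidableEq S] {T : Finset (R × S)} {x : R} {y : S} :
    SamePos (T.image Prod.swap) y x ↔ SamePos T x y := by
  simp only [SamePos, Finset.forall_mem_image, Prod.fst_swap, Prod.snd_swap]
  exact ⟨fun h t ht => ⟨(h ht).1.symm, (h ht).2.symm⟩, fun h t ht => ⟨(h t ht).1.symm, (h t ht).2.symm⟩⟩

/-- Adding one polynomial to a table. -/
theorem table_step (hR : PolyIVP R) (hS : PolyIVP S) (T : Finset (R × S)) (hT : MonoTable T)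
    (P : R[X]) (Q : S[X]) (hP : 0 < P.natDegree) (hQ : 0 < Q.natDegree)
    (hd : ∀ x y, SamePos T x y →
      SignType.sign ((derivative P).eval x) = SignType.sign ((derivative Q).eval y))
    (hPQ : ∀ t ∈ T, SignType.sign (P.eval t.1) = SignType.sign (Q.eval t.2)) :
    ∃ T' : Finset (R × S), T ⊆ T' ∧ MonoTable T' ∧
      (∀ t ∈ T', t ∈ T ∨ (P.eval t.1 = 0 ∧ Q.eval t.2 = 0)) ∧
      ∀ x y, SamePos T' x y → SignType.sign (P.eval x) = SignType.sign (Q.eval y) := by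
  classical
  have hP0 : P ≠ 0 := by rintro rfl; simp at hP
  have hQ0 : Q ≠ 0 := by rintro rfl; simp at hQ
  let N := (P.roots.toFinset ×ˢ Q.roots.toFinset).filter (fun t => SamePos T t.1 t.2)
  have hN : ∀ t, t ∈ N ↔ (P.eval t.1 = 0 ∧ Q.eval t.2 = 0) ∧ SamePos T t.1 t.2 := by
    intro t; simp [N, hP0, hQ0]
  refine ⟨T ∪ N, Finset.subset_union_left, ?_, ?_, ?_⟩
  · have key : ∀ s ∈ N, ∀ t ∈ N, s.1 < t.1 ↔ s.2 < t.2 := by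
      intro s hs t ht
      rw [hN] at hs ht
      refine ⟨new_roots_lt hR T P Q hP hd hs.2 ht.2 hs.1.1 ht.1.1, ?_⟩
      exact new_roots_lt hS (T.image Prod.swap) Q P hQ
        (fun y x h => (hd x y (samePos_swap.1 h)).symm) (samePos_swap.2 hs.2)
        (samePos_swap.2 ht.2) hs.1.2 ht.1.2
    intro s hs t ht
    rcases Finset.mem_union.1 hs with hs | hs <;> rcases Finset.mem_union.1 ht with ht | ht
    · exact hT s hs t ht
    · have := ((hN t).1 ht).2 s hs
      exact ⟨this.2, this.1⟩
    · exact ((hN s).1 hs).2 t ht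
    · exact ⟨key s hs t ht, key t ht s hs⟩
  · intro t ht
    rcases Finset.mem_union.1 ht with h | h
    · exact .inl h
    · exact .inr ((hN t).1 h).1
  · intro x y hxy
    have hxyT : SamePos T x y := fun t ht => hxy t (Finset.mem_union_left _ ht)
    by_cases hx : ∃ t ∈ T, t.1 = x
    · obtain ⟨t, ht, rfl⟩ := hx
      rw [(hxyT.eq_iff ht).1 rfl]
      exact hPQ t ht
    · push Not at hx
      have hroot : ∀ u v, SamePos T u v → P.eval u = 0 → Q.eval v = 0 →
          (x < u ↔ y < v) ∧ (u < x ↔ v < y) := fun u v huv hu hv =>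
        hxy (u, v) (Finset.mem_union_right _ ((hN (u, v)).2 ⟨⟨hu, hv⟩, huv⟩))
      rcases lt_or_gt_of_ne (cell_deriv_ne T P Q hP hd x y hxyT hx) with h | h
      · have := cell_sign_pos hR hS T hT (-P) (-Q) (by simpa using hP) (by simpa using hQ)
          (fun x y hxy => by simp [Left.sign_neg, hd x y hxy])
          (fun t ht => by simp [Left.sign_neg, hPQ t ht]) x y hxyT hx (by simpa using h)
          (fun u v huv hu hv => hroot u v huv (by simpa using hu) (by simpa using hv))
        simpa [Left.sign_neg] using this
      · exact cell_sign_pos hR hS T hT P Q hP hQ hd hPQ x y hxyT hx h hroot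

end TwoFields

section Elimination

variable {A : Type*} [CommRing A]

theorem exists_prem (p q : A[X]) (hq : 0 < q.natDegree) :
    ∃ (r s : A[X]) (N : ℕ), r.natDegree < q.natDegree ∧
      C q.leadingCoeff ^ (2 * N) * p = q * s + r := by
  induction hn : p.natDegree using Nat.strong_induction_on generalizing p with
  | _ n ih =>
    by_cases hlt : p.natDegree < q.natDegree
    · exact ⟨p, 0, 0, hlt, by simp⟩
    · push Not at hlt
      obtain ⟨r, s, N, h1, h2⟩ := ih _
        (hn ▸ natDegree_cancelLeads_lt_of_natDegree_le_natDegree hlt (hq.trans_le hlt))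
        (q.cancelLeads p) rfl
      refine ⟨C q.leadingCoeff * r, C q.leadingCoeff * s + C q.leadingCoeff ^ (2 * N + 1) *
        (C p.leadingCoeff * X ^ (p.natDegree - q.natDegree)), N + 1,
        (natDegree_C_mul_le _ _).trans_lt h1, ?_⟩
      have h3 : C q.leadingCoeff * p = q.cancelLeads p +
          C p.leadingCoeff * X ^ (p.natDegree - q.natDegree) * q := by
        rw [cancelLeads, Nat.sub_eq_zero_of_le hlt]; ring
      calc C q.leadingCoeff ^ (2 * (N + 1)) * p
          = C q.leadingCoeff * (C q.leadingCoeff ^ (2 * N) * (C q.leadingCoeff * p)) := by ring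
        _ = C q.leadingCoeff * (C q.leadingCoeff ^ (2 * N) * q.cancelLeads p) +
            C q.leadingCoeff ^ (2 * N + 1) *
              (C p.leadingCoeff * X ^ (p.natDegree - q.natDegree)) * q := by rw [h3]; ring
        _ = _ := by rw [h2]; ring

open Classical in
/-- A pseudo-remainder of `p` by `q`. -/
noncomputable def prem (p q : A[X]) : A[X] :=
  if hq : 0 < q.natDegree then (exists_prem p q hq).choose else 0

theorem prem_spec (p q : A[X]) (hq : 0 < q.natDegree) :
    (prem p q).natDegree < q.natDegree ∧ ∃ (s : A[X]) (N : ℕ),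
      C q.leadingCoeff ^ (2 * N) * p = q * s + prem p q := by
  have := (exists_prem p q hq).choose_spec
  rw [prem, dif_pos hq]
  obtain ⟨s, N, h1, h2⟩ := this
  exact ⟨h1, s, N, h2⟩

/-- Closedness under the elimination operations. -/
def ElimClosed (L : Finset A[X]) : Prop :=
  ∀ p ∈ L, ∀ q ∈ L, 0 < q.natDegree → q.natDegree ≤ p.natDegree →
    prem p q ∈ L ∧ derivative q ∈ L ∧ q.eraseLead ∈ L

theorem elim_ops_lt (p q : A[X]) (hq : 0 < q.natDegree) :
    (prem p q).natDegree < q.natDegree ∧ (derivative q).natDegree < q.natDegree ∧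
      q.eraseLead.natDegree < q.natDegree := by
  refine ⟨(prem_spec p q hq).1, natDegree_derivative_lt hq.ne', ?_⟩
  have := eraseLead_natDegree_le q
  omega

theorem exists_elimClosed (L : Finset A[X]) : ∃ L', L ⊆ L' ∧ ElimClosed L' := by
  classical
  set K := L.sup natDegree + 1 with hK
  have main : ∀ j : ℕ, ∃ L', L ⊆ L' ∧ ∀ p ∈ L', ∀ q ∈ L', K ≤ q.natDegree + j →
      0 < q.natDegree → q.natDegree ≤ p.natDegree →
      prem p q ∈ L' ∧ derivative q ∈ L' ∧ q.eraseLead ∈ L' := by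
    intro j
    induction j with
    | zero =>
      refine ⟨L, subset_rfl, fun p _ q hq h => ?_⟩
      have : q.natDegree ≤ L.sup natDegree := Finset.le_sup hq
      omega
    | succ j ih =>
      obtain ⟨L', hL', hcl⟩ := ih
      let N := ((L' ×ˢ L').filter
        (fun t => t.2.natDegree + j + 1 = K ∧ 0 < t.2.natDegree)).biUnion
          (fun t => {prem t.1 t.2, derivative t.2, t.2.eraseLead})
      have hNd : ∀ r ∈ N, r.natDegree + j + 1 < K := by
        intro r hr
        obtain ⟨t, ht, hr⟩ := Finset.mem_biUnion.1 hr
        obtain ⟨_, ht1, ht2⟩ := Finset.mem_filter.1 ht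
        have := elim_ops_lt t.1 t.2 ht2
        simp only [Finset.mem_insert, Finset.mem_singleton] at hr
        rcases hr with rfl | rfl | rfl <;> omega
      refine ⟨L' ∪ N, hL'.trans Finset.subset_union_left, fun p hp q hq h1 h2 h3 => ?_⟩
      have hq' : q ∈ L' := by
        rcases Finset.mem_union.1 hq with h | h
        · exact h
        · have := hNd q h; omega
      have hp' : p ∈ L' := by
        rcases Finset.mem_union.1 hp with h | h
        · exact h
        · have := hNd p h; omega
      by_cases h4 : K ≤ q.natDegree + j
      · obtain ⟨a, b, c⟩ := hcl p hp' q hq' h4 h2 h3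
        exact ⟨Finset.mem_union_left _ a, Finset.mem_union_left _ b, Finset.mem_union_left _ c⟩
      · have hsub : ({prem p q, derivative q, q.eraseLead} : Finset A[X]) ⊆ N := by
          intro r hr
          exact Finset.mem_biUnion.2 ⟨(p, q), Finset.mem_filter.2
            ⟨Finset.mem_product.2 ⟨hp', hq'⟩, by dsimp only; omega, h2⟩, hr⟩
        exact ⟨Finset.mem_union_right _ (hsub (by simp)), Finset.mem_union_right _ (hsub (by simp)),
          Finset.mem_union_right _ (hsub (by simp))⟩
  obtain ⟨L', h1, h2⟩ := main K
  exact ⟨L', h1, fun p hp q hq h3 h4 => h2 p hp q hq (by omega) h3 h4⟩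

variable {R S : Type*} [Field R] [LinearOrder R] [IsStrictOrderedRing R]
  [Field S] [LinearOrder S] [IsStrictOrderedRing S]

theorem sign_prem (φ : A →+* R) (p q : A[X]) (hq : 0 < q.natDegree) (hlc : φ q.leadingCoeff ≠ 0)
    (x : R) (hx : (q.map φ).eval x = 0) :
    SignType.sign ((p.map φ).eval x) = SignType.sign (((prem p q).map φ).eval x) := by
  obtain ⟨s, N, h⟩ := (prem_spec p q hq).2
  have h' := congrArg (fun g => (g.map φ).eval x) h
  simp only [Polynomial.map_mul, Polynomial.map_pow, Polynomial.map_add, map_C, eval_mul, eval_pow,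
    eval_C, eval_add, hx, zero_mul, zero_add] at h'
  have hp : 0 < φ q.leadingCoeff ^ (2 * N) := by
    rw [pow_mul]; positivity
  rw [← h', sign_mul, sign_pos hp, one_mul]

theorem exists_table (hR : PolyIVP R) (hS : PolyIVP S) (φ : A →+* R) (χ : A →+* S)
    (L : Finset A[X]) (hL : ElimClosed L)
    (hlc : ∀ p ∈ L, SignType.sign (φ p.leadingCoeff) = SignType.sign (χ p.leadingCoeff)) :
    ∃ T : Finset (R × S), MonoTable T ∧
      (∀ t ∈ T, ∃ q ∈ L, 0 < q.natDegree ∧ φ q.leadingCoeff ≠ 0 ∧ (q.map φ).eval t.1 = 0 ∧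
        (q.map χ).eval t.2 = 0) ∧
      ∀ x y, SamePos T x y → ∀ p ∈ L,
        SignType.sign ((p.map φ).eval x) = SignType.sign ((p.map χ).eval y) := by
  classical
  induction L using Finset.induction_on_max_value (fun p : A[X] => p.natDegree) with
  | empty => exact ⟨∅, by simp [MonoTable], by simp, by simp⟩
  | insert a s has hmax ih =>
    have hmem : ∀ r ∈ insert a s, r.natDegree < a.natDegree → r ∈ s := by
      intro r hr hlt
      rcases Finset.mem_insert.1 hr with rfl | h
      · exact absurd hlt (lt_irrefl _)
      · exact h
    have hcl : ElimClosed s := by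
      intro p hp q hq h1 h2
      obtain ⟨b1, b2, b3⟩ := hL p (Finset.mem_insert_of_mem hp) q (Finset.mem_insert_of_mem hq) h1 h2
      obtain ⟨c1, c2, c3⟩ := elim_ops_lt p q h1
      have := hmax q hq
      exact ⟨hmem _ b1 (by omega), hmem _ b2 (by omega), hmem _ b3 (by omega)⟩
    obtain ⟨T, hT1, hT2, hT3⟩ := ih hcl (fun p hp => hlc p (Finset.mem_insert_of_mem hp))
    have ha := hlc a (Finset.mem_insert_self _ _)
    have hT2' : ∀ t ∈ T, ∃ q ∈ insert a s, 0 < q.natDegree ∧ φ q.leadingCoeff ≠ 0 ∧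
        (q.map φ).eval t.1 = 0 ∧ (q.map χ).eval t.2 = 0 := fun t ht => by
      obtain ⟨q, hq, h⟩ := hT2 t ht
      exact ⟨q, Finset.mem_insert_of_mem hq, h⟩
    rcases Nat.eq_zero_or_pos a.natDegree with h0 | hpos
    · refine ⟨T, hT1, hT2', fun x y hxy p hp => ?_⟩
      rcases Finset.mem_insert.1 hp with rfl | hp
      · obtain ⟨c, rfl⟩ := natDegree_eq_zero.1 h0
        simpa using ha
      · exact hT3 x y hxy p hp
    · obtain ⟨-, b2, b3⟩ := hL a (Finset.mem_insert_self _ _) a (Finset.mem_insert_self _ _) hpos le_rfl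
      obtain ⟨-, c2, c3⟩ := elim_ops_lt a a hpos
      have b2 := hmem _ b2 c2
      have b3 := hmem _ b3 c3
      by_cases hz : φ a.leadingCoeff = 0
      · have hz' : χ a.leadingCoeff = 0 := by
          rw [← sign_eq_zero_iff, ← ha, hz, sign_zero]
        refine ⟨T, hT1, hT2', fun x y hxy p hp => ?_⟩
        rcases Finset.mem_insert.1 hp with rfl | hp
        · have e1 : p.map φ = p.eraseLead.map φ := by
            have := congrArg (Polynomial.map φ) (eraseLead_add_C_mul_X_pow p)
            rw [Polynomial.map_add, Polynomial.map_mul, map_C, hz, C_0,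
              zero_mul, add_zero] at this
            exact this.symm
          have e2 : p.map χ = p.eraseLead.map χ := by
            have := congrArg (Polynomial.map χ) (eraseLead_add_C_mul_X_pow p)
            rw [Polynomial.map_add, Polynomial.map_mul, map_C, hz', C_0,
              zero_mul, add_zero] at this
            exact this.symm
          rw [e1, e2]
          exact hT3 x y hxy _ b3
        · exact hT3 x y hxy p hp
      · have hz' : χ a.leadingCoeff ≠ 0 := by
          rw [← sign_ne_zero, ← ha, sign_ne_zero]; exact hz
        obtain ⟨T', h1, h2, h3, h4⟩ := table_step hR hS T hT1 (a.map φ) (a.map χ)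
          (by rwa [natDegree_map_of_leadingCoeff_ne_zero φ hz])
          (by rwa [natDegree_map_of_leadingCoeff_ne_zero χ hz'])
          (fun x y hxy => by
            rw [derivative_map, derivative_map]; exact hT3 x y hxy _ b2)
          (fun t ht => by
            obtain ⟨q, hq, hq1, hq2, hq3, hq4⟩ := hT2 t ht
            have hq2' : χ q.leadingCoeff ≠ 0 := by
              rw [← sign_ne_zero, ← hlc q (Finset.mem_insert_of_mem hq), sign_ne_zero]; exact hq2
            rw [sign_prem φ a q hq1 hq2 _ hq3, sign_prem χ a q hq1 hq2' _ hq4]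
            refine hT3 _ _ (hT1 t ht) _ (hmem _ ?_ ?_)
            · exact (hL a (Finset.mem_insert_self _ _) q (Finset.mem_insert_of_mem hq) hq1
                (hmax q hq)).1
            · exact (elim_ops_lt a q hq1).1.trans_le (hmax q hq))
        refine ⟨T', h2, fun t ht => ?_, fun x y hxy p hp => ?_⟩
        · rcases h3 t ht with h | ⟨e1, e2⟩
          · exact hT2' t h
          · exact ⟨a, Finset.mem_insert_self _ _, hpos, hz, e1, e2⟩
        · rcases Finset.mem_insert.1 hp with rfl | hp
          · exact h4 x y hxy
          · exact hT3 x y (fun t ht => hxy t (h1 ht)) p hp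

end Elimination

theorem real_polyIVP : PolyIVP ℝ := by
  intro p a b hab h
  have hc : ContinuousOn (fun x => p.eval x) (Set.Icc a b) := p.continuous.continuousOn
  rcases mul_neg_iff.1 h with ⟨h1, h2⟩ | ⟨h1, h2⟩
  · obtain ⟨c, hc, h⟩ := intermediate_value_Ioo' hab.le hc ⟨h2, h1⟩
    exact ⟨c, hc.1, hc.2, h⟩
  · obtain ⟨c, hc, h⟩ := intermediate_value_Ioo hab.le hc ⟨h1, h2⟩
    exact ⟨c, hc.1, hc.2, h⟩

theorem eval₂_finSucc {K : Type*} [CommRing K] (ι : ℝ →+* K) (n : ℕ) (τ : Fin (n + 1) → K)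
    (g : MvPolynomial (Fin (n + 1)) ℝ) :
    MvPolynomial.eval₂ ι τ g = Polynomial.eval (τ 0) (Polynomial.map
      (MvPolynomial.eval₂Hom ι (fun i => τ i.succ)) (MvPolynomial.finSuccEquiv ℝ n g)) := by
  have key : MvPolynomial.eval₂Hom ι τ = (Polynomial.evalRingHom (τ 0)).comp
      ((Polynomial.mapRingHom (MvPolynomial.eval₂Hom ι (fun i : Fin n => τ i.succ))).comp
        (MvPolynomial.finSuccEquiv ℝ n).toRingEquiv.toRingHom) := by
    apply MvPolynomial.ringHom_ext
    · intro r
      simp [MvPolynomial.finSuccEquiv_apply]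
    · intro i
      refine Fin.cases ?_ (fun j => ?_) i
      · simp [MvPolynomial.finSuccEquiv_X_zero]
      · simp [MvPolynomial.finSuccEquiv_X_succ]
  exact congrArg (fun f : MvPolynomial (Fin (n + 1)) ℝ →+* K => f g) key

/-- Transfer of sign conditions from a real closed extension to the reals. -/
theorem sign_transfer {K : Type*} [Field K] [LinearOrder K] [IsStrictOrderedRing K]
    (hK : PolyIVP K) (ι : ℝ →+* K) (n : ℕ) (G : Finset (MvPolynomial (Fin n) ℝ)) (τ : Fin n → K) :
    ∃ x : Fin n → ℝ, ∀ g ∈ G, SignType.sign (MvPolynomial.eval₂ ι τ g) =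
      SignType.sign (MvPolynomial.eval x g) := by
  classical
  induction n with
  | zero =>
    refine ⟨Fin.elim0, fun g _ => ?_⟩
    obtain ⟨c, rfl⟩ := MvPolynomial.C_surjective (Fin 0) g
    simp only [MvPolynomial.eval₂_C, MvPolynomial.eval_C]
    have hpos : ∀ r : ℝ, 0 < r → 0 < ι r := by
      intro r hr
      have : ι r = ι (√r) ^ 2 := by rw [← map_pow, Real.sq_sqrt hr.le]
      have h0 : ι r ≠ 0 := (map_ne_zero ι).2 hr.ne'
      exact lt_of_le_of_ne (this ▸ sq_nonneg _) h0.symm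
    rcases lt_trichotomy c 0 with h | rfl | h
    · have := hpos (-c) (by linarith)
      rw [map_neg] at this
      rw [sign_neg h, sign_neg (by linarith)]
    · simp
    · rw [sign_pos h, sign_pos (hpos c h)]
  | succ n ih =>
    obtain ⟨L, hL', hcl⟩ := exists_elimClosed
      (G.image (fun g => MvPolynomial.finSuccEquiv ℝ n g))
    have hL : ∀ g ∈ G, MvPolynomial.finSuccEquiv ℝ n g ∈ L :=
      fun g hg => hL' (Finset.mem_image_of_mem _ hg)
    clear hL'
    obtain ⟨L₀, hL₀⟩ : ∃ L₀ : Finset (MvPolynomial (Fin n) ℝ), ∀ p ∈ L, p.leadingCoeff ∈ L₀ :=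
      ⟨L.image (fun p => p.leadingCoeff), fun p hp => Finset.mem_image_of_mem _ hp⟩
    obtain ⟨x, hx⟩ := ih L₀ (fun i => τ i.succ)
    have hx' : ∀ p ∈ L, SignType.sign
        (MvPolynomial.eval₂Hom ι (fun i : Fin n => τ i.succ) p.leadingCoeff) =
        SignType.sign (MvPolynomial.eval x p.leadingCoeff) := by
      intro p hp
      have h2 := hx p.leadingCoeff (hL₀ p hp)
      rw [MvPolynomial.coe_eval₂Hom]
      exact h2
    obtain ⟨T, hT, -, hs⟩ := exists_table hK real_polyIVP
      (MvPolynomial.eval₂Hom ι (fun i => τ i.succ)) (MvPolynomial.eval x) L hcl (by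
        intro p hp
        convert hx' p hp using 2)
    obtain ⟨y, hy⟩ := exists_samePos T hT (τ 0)
    refine ⟨Fin.cons y x, fun g hg => ?_⟩
    have := hs (τ 0) y hy (MvPolynomial.finSuccEquiv ℝ n g) (hL g hg)
    rw [MvPolynomial.eval_eq_eval_mv_eval']
    rw [eval₂_finSucc ι n τ g]
    convert this using 2

section PolyConeSection

/-- Sums of terms `c * g ^ 2` with `c ∈ P`. -/
noncomputable def PolyCone {F : Type*} [Field F] (P : Set F) : AddSubmonoid F[X] :=
  AddSubmonoid.closure {x | ∃ c ∈ P, ∃ g : F[X], x = C c * g ^ 2}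

section Ordered

variable {F : Type*} [Field F] [LinearOrder F] [IsStrictOrderedRing F]

theorem polyCone_eval_nonneg {G : F[X]} (hG : G ∈ PolyCone {c : F | 0 ≤ c}) (x : F) :
    0 ≤ G.eval x := by
  induction hG using AddSubmonoid.closure_induction with
  | mem y hy =>
    obtain ⟨c, hc, g, rfl⟩ := hy
    have hc : 0 ≤ c := hc
    simp only [eval_mul, eval_C, eval_pow]
    positivity
  | zero => simp
  | add y z _ _ h1 h2 => rw [eval_add]; exact add_nonneg h1 h2

theorem polyCone_reduce (p : F[X]) (hp : p.natDegree ≠ 0) {G : F[X]}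
    (hG : G ∈ PolyCone {c : F | 0 ≤ c}) :
    ∃ G' ∈ PolyCone {c : F | 0 ≤ c}, p ∣ G - G' ∧ G'.natDegree + 2 ≤ 2 * p.natDegree := by
  induction hG using AddSubmonoid.closure_induction with
  | mem y hy =>
    obtain ⟨c, hc, g, rfl⟩ := hy
    refine ⟨C c * (g % p) ^ 2, AddSubmonoid.subset_closure ⟨c, hc, _, rfl⟩, ?_, ?_⟩
    · have h1 : g = p * (g / p) + g % p := (EuclideanDomain.div_add_mod g p).symm
      have h2 : C c * g ^ 2 - C c * (g % p) ^ 2 = p * (C c * (g / p) * (g + g % p)) := by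
        linear_combination (C c * (g + g % p)) * h1
      rw [h2]; exact dvd_mul_right _ _
    · have h1 := natDegree_mod_lt g hp
      have h2 := (natDegree_C_mul_le c ((g % p) ^ 2)).trans natDegree_pow_le
      omega
  | zero => exact ⟨0, zero_mem _, by simp, by simp; omega⟩
  | add y z _ _ h1 h2 =>
    obtain ⟨a, ha, ha1, ha2⟩ := h1
    obtain ⟨b, hb, hb1, hb2⟩ := h2
    refine ⟨a + b, add_mem ha hb, ?_, ?_⟩
    · have : y + z - (a + b) = (y - a) + (z - b) := by ring
      rw [this]; exact dvd_add ha1 hb1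
    · have := natDegree_add_le a b
      omega

theorem natDegree_ne_zero_of_sign_change {p : F[X]} {a b : F} (h : p.eval a * p.eval b < 0) :
    p.natDegree ≠ 0 := by
  intro h0
  obtain ⟨c, rfl⟩ := natDegree_eq_zero.1 h0
  simp only [eval_C] at h
  nlinarith [mul_self_nonneg c]

theorem polyCone_not_dvd (p : F[X]) (a b : F) (h : p.eval a * p.eval b < 0) (G : F[X])
    (hG : G ∈ PolyCone {c : F | 0 ≤ c}) : ¬ p ∣ 1 + G := by
  induction hn : p.natDegree using Nat.strong_induction_on generalizing p G with
  | _ n ih =>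
    intro hdvd
    have hp0 := natDegree_ne_zero_of_sign_change h
    obtain ⟨G', hG', h1, h2⟩ := polyCone_reduce p hp0 hG
    obtain ⟨q, hq⟩ : p ∣ 1 + G' := by
      have : 1 + G' = (1 + G) - (G - G') := by ring
      rw [this]; exact dvd_sub hdvd h1
    have hpos : ∀ x, 0 < p.eval x * q.eval x := by
      intro x
      rw [← eval_mul, ← hq, eval_add, eval_one]
      have := polyCone_eval_nonneg hG' x
      linarith
    have hq0 : q ≠ 0 := by
      rintro rfl
      simpa using hpos 0
    have hp0' : p ≠ 0 := by
      rintro rfl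
      simp at hp0
    have hdeg : p.natDegree + q.natDegree ≤ G'.natDegree := by
      rw [← natDegree_mul hp0' hq0, ← hq]
      refine (natDegree_add_le _ _).trans ?_
      simp
    refine ih q.natDegree (by omega) q ?_ G' hG' rfl ⟨p, by rw [hq]; ring⟩
    by_contra hcon
    push Not at hcon
    have h3 := mul_pos (hpos a) (hpos b)
    nlinarith [mul_nonneg (neg_nonneg.2 h.le) hcon]

theorem polyIVP_of_maximal {Ω : Type*} [Field Ω] [IsAlgClosed Ω] [Algebra F Ω]
    (H : ∀ a : Ω, a ∉ Set.range (algebraMap F Ω) → IsIntegral F a →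
      ∃ G ∈ PolyCone {c : F | 0 ≤ c}, aeval a G = -1) : PolyIVP F := by
  intro p a b hab h
  induction hn : p.natDegree using Nat.strong_induction_on generalizing p with
  | _ n ih =>
    have hp0 := natDegree_ne_zero_of_sign_change h
    have hp0' : p ≠ 0 := by
      rintro rfl
      simp at hp0
    -- a factorization settles the claim
    have hfac : ∀ q r : F[X], p = q * r → q.natDegree ≠ 0 → r.natDegree ≠ 0 →
        ∃ c, a < c ∧ c < b ∧ p.eval c = 0 := by
      intro q r hqr hq hr
      have hd : p.natDegree = q.natDegree + r.natDegree := by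
        rw [hqr, natDegree_mul]
        · rintro rfl; simp at hq
        · rintro rfl; simp at hr
      have hprod : (q.eval a * q.eval b) * (r.eval a * r.eval b) < 0 := by
        have : p.eval a * p.eval b = (q.eval a * q.eval b) * (r.eval a * r.eval b) := by
          rw [hqr, eval_mul, eval_mul]; ring
        rwa [← this]
      rcases mul_neg_iff.1 hprod with ⟨_, h2⟩ | ⟨h1, _⟩
      · obtain ⟨c, hc1, hc2, hc3⟩ := ih r.natDegree (by omega) r h2 rfl
        exact ⟨c, hc1, hc2, by rw [hqr, eval_mul, hc3, mul_zero]⟩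
      · obtain ⟨c, hc1, hc2, hc3⟩ := ih q.natDegree (by omega) q h1 rfl
        exact ⟨c, hc1, hc2, by rw [hqr, eval_mul, hc3, zero_mul]⟩
    have hnu : ¬ IsUnit p := fun hu => hp0 (natDegree_eq_zero_of_isUnit hu)
    by_cases hirr : Irreducible p
    · obtain ⟨α, hα⟩ := IsAlgClosed.exists_aeval_eq_zero Ω p
        (fun h0 => hp0 (natDegree_eq_of_degree_eq_some h0))
      by_cases hr : α ∈ Set.range (algebraMap F Ω)
      · obtain ⟨c, rfl⟩ := hr
        have hroot : p.IsRoot c := by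
          rw [aeval_algebraMap_apply] at hα
          simpa using hα
        obtain ⟨q, hq⟩ := dvd_iff_isRoot.2 hroot
        by_cases hq0 : q.natDegree = 0
        · obtain ⟨u, rfl⟩ := natDegree_eq_zero.1 hq0
          rw [hq] at h
          simp only [eval_mul, eval_sub, eval_X, eval_C] at h
          have h4 : (a - c) * (b - c) < 0 := by
            by_contra hcon
            push Not at hcon
            nlinarith [mul_nonneg hcon (mul_self_nonneg u)]
          rcases mul_neg_iff.1 h4 with ⟨h5, h6⟩ | ⟨h5, h6⟩
          · linarith
          · exact ⟨c, by linarith, by linarith, hroot⟩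
        · exact hfac _ q hq (by simp) hq0
      · obtain ⟨G, hG, hGa⟩ := H α hr (IsAlgebraic.isIntegral ⟨p, hp0', hα⟩)
        exfalso
        refine polyCone_not_dvd p a b h G hG ?_
        by_contra hnd
        obtain ⟨u, v, huv⟩ := hirr.coprime_iff_not_dvd.2 hnd
        have := congrArg (aeval α) huv
        simp [hα, hGa] at this
    · rw [irreducible_iff] at hirr
      push Not at hirr
      obtain ⟨q, r, hqr, hq, hr⟩ := hirr hnu
      have hne : ∀ g : F[X], g ≠ 0 → ¬ IsUnit g → g.natDegree ≠ 0 := fun g h1 h2 =>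
        (natDegree_pos_iff_degree_pos.2 (degree_pos_of_ne_zero_of_nonunit h1 h2)).ne'
      refine hfac q r hqr (hne q ?_ hq) (hne r ?_ hr)
      · rintro rfl; exact hp0' (by rw [hqr, zero_mul])
      · rintro rfl; exact hp0' (by rw [hqr, mul_zero])

end Ordered

theorem exists_order {F : Type*} [Field F] (P : Subsemiring F) (h1 : (-1 : F) ∉ P)
    (hsq : ∀ x : F, x ^ 2 ∈ P) (htot : ∀ x : F, x ∈ P ∨ -x ∈ P) :
    ∃ (_ : LinearOrder F) (_ : IsStrictOrderedRing F), ∀ x : F, 0 ≤ x ↔ x ∈ P := by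
  classical
  have hanti : ∀ x, x ∈ P → -x ∈ P → x = 0 := by
    intro x hx hx'
    by_contra hne
    apply h1
    have : (-1 : F) = (-x) * x * (x⁻¹) ^ 2 := by field_simp
    rw [this]
    exact mul_mem (mul_mem hx' hx) (hsq _)
  let o : LinearOrder F :=
    { le := fun x y => y - x ∈ P
      le_refl := fun x => by simp
      le_trans := fun x y z hxy hyz => by
        have : z - x = (z - y) + (y - x) := by ring
        rw [this]; exact add_mem hyz hxy
      le_antisymm := fun x y hxy hyx => by
        have := hanti (y - x) hxy (by rw [neg_sub]; exact hyx)
        exact (sub_eq_zero.1 this).symm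
      le_total := fun x y => by
        have := htot (y - x)
        rwa [neg_sub] at this
      toDecidableLE := Classical.decRel _ }
  have hle : ∀ x y : F, x ≤ y ↔ y - x ∈ P := fun x y => Iff.rfl
  have i1 : IsOrderedAddMonoid F :=
    { add_le_add_left := fun a b hab c => by
        rw [hle] at *
        have : b + c - (a + c) = b - a := by ring
        rwa [this] }
  have i2 : ZeroLEOneClass F := ⟨by rw [hle, sub_zero]; exact one_mem P⟩
  have i3 : IsStrictOrderedRing F := IsStrictOrderedRing.of_mul_pos (fun a b ha hb => by
    refine lt_of_le_of_ne ?_ (mul_ne_zero ha.ne' hb.ne').symm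
    have h1 := (hle 0 a).1 ha.le
    have h2 := (hle 0 b).1 hb.le
    rw [hle]
    rw [sub_zero] at *
    exact mul_mem h1 h2)
  exact ⟨o, i3, fun x => by rw [hle, sub_zero]⟩

/-- Totality of a maximal cone. -/
theorem cone_total {F : Type*} [Field F] (P : Subsemiring F)
    (hsq : ∀ x : F, x ^ 2 ∈ P) {Ω : Type*} [Field Ω] [IsAlgClosed Ω] [Algebra F Ω]
    (H : ∀ a : Ω, a ∉ Set.range (algebraMap F Ω) → IsIntegral F a →
      ∃ G ∈ PolyCone (P : Set F), aeval a G = -1) (h1 : (-1 : F) ∉ P) (d : F) : d ∈ P ∨ -d ∈ P := by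
  obtain ⟨a, ha⟩ := IsAlgClosed.exists_pow_nat_eq (algebraMap F Ω d) (n := 2) (by norm_num)
  by_cases hr : a ∈ Set.range (algebraMap F Ω)
  · obtain ⟨c, rfl⟩ := hr
    rw [← map_pow] at ha
    left
    rw [← (algebraMap F Ω).injective ha]
    exact hsq c
  · right
    have hm : (X ^ 2 - C d : F[X]).Monic := monic_X_pow_sub_C d (by norm_num)
    have hroot : aeval a (X ^ 2 - C d : F[X]) = 0 := by simp [ha]
    obtain ⟨G, hG, hGa⟩ := H a hr ⟨_, hm, by simpa [aeval_def] using hroot⟩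
    have key : ∃ s ∈ P, ∃ t ∈ P, ∃ u : F, aeval a G = algebraMap F Ω (s + d * t) +
        algebraMap F Ω u * a := by
      clear hGa
      induction hG using AddSubmonoid.closure_induction with
      | mem y hy =>
        obtain ⟨c, hc, g, rfl⟩ := hy
        have hc : c ∈ P := hc
        have hdeg : (g %ₘ (X ^ 2 - C d)).natDegree ≤ 1 := by
          have := natDegree_modByMonic_lt g hm (by
            intro h
            have := congrArg natDegree h
            rw [natDegree_X_pow_sub_C] at this
            simp at this)
          rw [natDegree_X_pow_sub_C] at this
          omega
        obtain ⟨v, u, hvu⟩ := exists_eq_X_add_C_of_natDegree_le_one hdeg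
        have hg : aeval a g = algebraMap F Ω v * a + algebraMap F Ω u := by
          have h2 := congrArg (aeval a) (modByMonic_add_div g (X ^ 2 - C d))
          rw [map_add, map_mul, hroot, zero_mul, add_zero, hvu] at h2
          rw [← h2]; simp
        refine ⟨c * u ^ 2, mul_mem hc (hsq u), c * v ^ 2, mul_mem hc (hsq v), 2 * c * u * v, ?_⟩
        rw [map_mul, map_pow, aeval_C, hg]
        simp only [map_add, map_mul, map_pow, ← ha, map_ofNat]
        ring
      | zero => exact ⟨0, zero_mem _, 0, zero_mem _, 0, by simp⟩
      | add y z _ _ hy hz =>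
        obtain ⟨s, hs, t, ht, u, e⟩ := hy
        obtain ⟨s', hs', t', ht', u', e'⟩ := hz
        refine ⟨s + s', add_mem hs hs', t + t', add_mem ht ht', u + u', ?_⟩
        rw [map_add, e, e']
        simp only [map_add, map_mul]
        ring
    obtain ⟨s, hs, t, ht, u, e⟩ := key
    rw [hGa] at e
    have hu : u = 0 := by
      by_contra hu
      apply hr
      refine ⟨(-1 - (s + d * t)) / u, ?_⟩
      have hu' : algebraMap F Ω u ≠ 0 := (_root_.map_ne_zero _).2 hu
      rw [map_div₀, div_eq_iff hu', map_sub, map_neg, map_one, e]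
      ring
    have e2 : (-1 : F) = s + d * t := by
      apply (algebraMap F Ω).injective
      rw [map_neg, map_one, e, hu]; simp
    have ht0 : t ≠ 0 := by
      rintro rfl
      apply h1
      rw [e2]; simpa using hs
    have : -d = (1 + s) * t * (t⁻¹) ^ 2 := by
      field_simp
      linear_combination e2
    rw [this]
    exact mul_mem (mul_mem (add_mem (one_mem _) hs) ht) (hsq _)

end PolyConeSection

section Construction

universe u

variable {A : Type u} [CommRing A]

theorem exists_good_prime (T0 : Subsemiring A) (hsq : ∀ a : A, a ^ 2 ∈ T0) (I0 : Ideal A)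
    (h : ∀ t ∈ T0, 1 + t ∉ I0) :
    ∃ P : Ideal A, P.IsPrime ∧ I0 ≤ P ∧ ∀ b, b ∉ P → ∀ t ∈ T0, b ^ 2 + t ∉ P := by
  let S : Submonoid A :=
    { carrier := {x | ∃ t ∈ T0, x = 1 + t}
      one_mem' := ⟨0, zero_mem _, by simp⟩
      mul_mem' := by
        rintro _ _ ⟨s, hs, rfl⟩ ⟨t, ht, rfl⟩
        exact ⟨s + t + s * t, add_mem (add_mem hs ht) (mul_mem hs ht), by ring⟩ }
  obtain ⟨P, hP1, hP2⟩ := zorn_le_nonempty₀ {J : Ideal A | ∀ t ∈ T0, 1 + t ∉ J} (by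
    intro c hc hchain J hJ
    refine ⟨sSup c, ?_, fun z hz => le_sSup hz⟩
    intro t ht hmem
    obtain ⟨J', hJ', hm⟩ := (Submodule.mem_sSup_of_directed ⟨J, hJ⟩ hchain.directedOn).1 hmem
    exact hc hJ' t ht hm) I0 h
  have hmax : ∀ J : Ideal A, P < J → ∃ t ∈ T0, 1 + t ∈ J := by
    intro J hJ
    by_contra hcon
    push Not at hcon
    exact hJ.not_ge (hP2.2 hcon hJ.le)
  refine ⟨P, ?_, hP1, ?_⟩
  · apply Ideal.isPrime_of_maximally_disjoint P S
    · rw [Set.disjoint_left]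
      rintro x hx ⟨t, ht, rfl⟩
      exact hP2.1 t ht hx
    · intro J hJ hd
      obtain ⟨t, ht, hm⟩ := hmax J hJ
      exact Set.disjoint_left.1 hd hm ⟨t, ht, rfl⟩
  · intro b hb t ht hmem
    obtain ⟨s, hs, hm⟩ := hmax (Ideal.span {b} ⊔ P) (lt_of_le_of_ne le_sup_right (by
      intro he
      apply hb
      rw [he]
      exact Ideal.mem_sup_left (Ideal.mem_span_singleton_self b)))
    obtain ⟨c, q, hq, e⟩ := Ideal.mem_span_singleton_sup.1 hm
    refine hP2.1 (s + s + s ^ 2 + c ^ 2 * t) (add_mem (add_mem (add_mem hs hs) (pow_mem hs 2))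
      (mul_mem (hsq c) ht)) ?_
    have : 1 + (s + s + s ^ 2 + c ^ 2 * t) = c ^ 2 * (b ^ 2 + t) + (2 * c * b + q) * q := by
      linear_combination (-(1 + s) - (c * b + q)) * e
    rw [this]
    exact add_mem (P.mul_mem_left _ hmem) (P.mul_mem_left _ hq)

variable {Ω : Type u} [Field Ω]

/-- The multiplicative monoid of the elements `ψ t * e ^ 2`. -/
def coneMonoid (T0 : Subsemiring A) (ψ : A →+* Ω) (E : Subfield Ω) : Submonoid Ω where
  carrier := {x | ∃ t ∈ T0, ∃ e ∈ E, x = ψ t * e ^ 2}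
  one_mem' := ⟨1, one_mem _, 1, one_mem _, by simp⟩
  mul_mem' := by
    rintro _ _ ⟨s, hs, e, he, rfl⟩ ⟨t, ht, e', he', rfl⟩
    exact ⟨s * t, mul_mem hs ht, e * e', mul_mem he he', by rw [map_mul]; ring⟩

/-- The cone generated by `T0` and the squares of `E`. -/
def Cone (T0 : Subsemiring A) (ψ : A →+* Ω) (E : Subfield Ω) : Subsemiring Ω :=
  (coneMonoid T0 ψ E).subsemiringClosure

theorem mem_cone {T0 : Subsemiring A} {ψ : A →+* Ω} {E : Subfield Ω} {x : Ω} :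
    x ∈ Cone T0 ψ E ↔ x ∈ AddSubmonoid.closure {x | ∃ t ∈ T0, ∃ e ∈ E, x = ψ t * e ^ 2} :=
  Submonoid.subsemiringClosure_mem _

theorem cone_mono {T0 : Subsemiring A} {ψ : A →+* Ω} {E E' : Subfield Ω} (h : E ≤ E') :
    Cone T0 ψ E ≤ Cone T0 ψ E' := by
  intro x hx
  rw [mem_cone] at *
  refine AddSubmonoid.closure_mono ?_ hx
  rintro _ ⟨t, ht, e, he, rfl⟩
  exact ⟨t, ht, e, h he, rfl⟩

theorem mul_sq_mem_cone {T0 : Subsemiring A} {ψ : A →+* Ω} {E : Subfield Ω} {t : A} (ht : t ∈ T0)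
    {e : Ω} (he : e ∈ E) : ψ t * e ^ 2 ∈ Cone T0 ψ E :=
  mem_cone.2 (AddSubmonoid.subset_closure ⟨t, ht, e, he, rfl⟩)

theorem neg_one_not_mem_cone (T0 : Subsemiring A) (hsq : ∀ a : A, a ^ 2 ∈ T0) (ψ : A →+* Ω)
    (h : ∀ b, ψ b ≠ 0 → ∀ t ∈ T0, ψ b ^ 2 + ψ t ≠ 0) :
    (-1 : Ω) ∉ Cone T0 ψ (Subfield.closure (ψ.range : Set Ω)) := by
  intro hm
  rw [mem_cone] at hm
  have key : ∀ x ∈ AddSubmonoid.closure {x | ∃ t ∈ T0, ∃ e ∈ Subfield.closure (ψ.range : Set Ω),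
      x = ψ t * e ^ 2}, ∃ b, ψ b ≠ 0 ∧ ∃ t ∈ T0, ψ b ^ 2 * x = ψ t := by
    intro x hx
    induction hx using AddSubmonoid.closure_induction with
    | mem x hx =>
      obtain ⟨t, ht, e, he, rfl⟩ := hx
      rw [Subfield.mem_closure_iff, Subring.closure_eq] at he
      obtain ⟨_, ⟨y, rfl⟩, _, ⟨z, rfl⟩, rfl⟩ := he
      by_cases hz : ψ z = 0
      · exact ⟨1, by simp, 0, zero_mem _, by simp [hz]⟩
      · refine ⟨z, hz, t * y ^ 2, mul_mem ht (hsq y), ?_⟩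
        rw [map_mul, map_pow]
        field_simp
    | zero => exact ⟨1, by simp, 0, zero_mem _, by simp⟩
    | add x y _ _ hx hy =>
      obtain ⟨b, hb, t, ht, e⟩ := hx
      obtain ⟨b', hb', t', ht', e'⟩ := hy
      refine ⟨b * b', by rw [map_mul]; exact mul_ne_zero hb hb', b' ^ 2 * t + b ^ 2 * t',
        add_mem (mul_mem (hsq _) ht) (mul_mem (hsq _) ht'), ?_⟩
      simp only [map_add, map_mul, map_pow, ← e, ← e']
      ring
  obtain ⟨b, hb, t, ht, e⟩ := key _ hm
  apply h b hb t ht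
  rw [← e]; ring

theorem exists_maximal_subfield (T0 : Subsemiring A) (ψ : A →+* Ω) (E0 : Subfield Ω)
    (h : (-1 : Ω) ∉ Cone T0 ψ E0) :
    ∃ K : Subfield Ω, E0 ≤ K ∧ (-1 : Ω) ∉ Cone T0 ψ K ∧
      ∀ L : Subfield Ω, K < L → (-1 : Ω) ∈ Cone T0 ψ L := by
  obtain ⟨K, hK1, hK2⟩ := zorn_le_nonempty₀ {E : Subfield Ω | (-1 : Ω) ∉ Cone T0 ψ E} (by
    intro c hc hchain E hE
    refine ⟨sSup c, ?_, fun z hz => le_sSup hz⟩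
    intro hmem
    rw [mem_cone] at hmem
    have key : ∀ x ∈ AddSubmonoid.closure {x | ∃ t ∈ T0, ∃ e ∈ sSup c, x = ψ t * e ^ 2},
        ∃ E ∈ c, x ∈ Cone T0 ψ E := by
      intro x hx
      induction hx using AddSubmonoid.closure_induction with
      | mem x hx =>
        obtain ⟨t, ht, e, he, rfl⟩ := hx
        obtain ⟨E', hE', he'⟩ :=
          (Subfield.mem_sSup_of_directedOn ⟨E, hE⟩ hchain.directedOn).1 he
        exact ⟨E', hE', mul_sq_mem_cone ht he'⟩
      | zero => exact ⟨E, hE, zero_mem _⟩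
      | add x y _ _ hx hy =>
        obtain ⟨E1, h1, h1'⟩ := hx
        obtain ⟨E2, h2, h2'⟩ := hy
        obtain ⟨E3, h3, h13, h23⟩ := hchain.directedOn E1 h1 E2 h2
        exact ⟨E3, h3, add_mem (cone_mono h13 h1') (cone_mono h23 h2')⟩
    obtain ⟨E', hE', hm⟩ := key _ hmem
    exact hc hE' hm) E0 h
  refine ⟨K, hK1, hK2.1, fun L hL => ?_⟩
  by_contra hcon
  exact hL.not_ge (hK2.2 hcon hL.le)

theorem maximal_adjoin (T0 : Subsemiring A) (ψ : A →+* Ω) (K : Subfield Ω)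
    (hr : ∀ a, ψ a ∈ K) (hmax : ∀ L : Subfield Ω, K < L → (-1 : Ω) ∈ Cone T0 ψ L) (a : Ω)
    (ha : a ∉ Set.range (algebraMap K Ω)) (halg : IsIntegral K a) :
    ∃ G ∈ PolyCone (((Cone T0 ψ K).comap K.subtype : Subsemiring K) : Set K), aeval a G = -1 := by
  have hL : ∀ e ∈ (IntermediateField.adjoin K {a}).toSubfield, ∃ g : K[X], aeval a g = e := by
    intro e he
    have h1 : e ∈ (IntermediateField.adjoin K {a}).toSubalgebra := he
    rw [IntermediateField.adjoin_simple_toSubalgebra_of_isAlgebraic halg.isAlgebraic,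
      Algebra.adjoin_singleton_eq_range_aeval] at h1
    exact h1
  have hlt : K < (IntermediateField.adjoin K {a}).toSubfield := by
    refine lt_of_le_of_ne ?_ ?_
    · intro x hx
      exact (IntermediateField.adjoin K {a}).algebraMap_mem ⟨x, hx⟩
    · intro he
      apply ha
      have : a ∈ K := by
        rw [he]
        exact IntermediateField.mem_adjoin_simple_self K a
      exact ⟨⟨a, this⟩, rfl⟩
  have hm := hmax _ hlt
  rw [mem_cone] at hm
  generalize (-1 : Ω) = w at hm ⊢
  induction hm using AddSubmonoid.closure_induction with
  | mem x hx =>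
    obtain ⟨t, ht, e, he, rfl⟩ := hx
    obtain ⟨g, rfl⟩ := hL e he
    refine ⟨C ⟨ψ t, hr t⟩ * g ^ 2, AddSubmonoid.subset_closure ⟨_, ?_, g, rfl⟩, ?_⟩
    · have := mul_sq_mem_cone (T0 := T0) (ψ := ψ) (E := K) ht (one_mem K)
      simpa using this
    · rw [map_mul, map_pow, aeval_C]; rfl
  | zero => exact ⟨0, zero_mem _, by simp⟩
  | add x y _ _ hx hy =>
    obtain ⟨G, hG, rfl⟩ := hx
    obtain ⟨G', hG', rfl⟩ := hy
    exact ⟨G + G', add_mem hG hG', by simp⟩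

theorem exists_real_closed_point (T0 : Subsemiring A) (hsq : ∀ a : A, a ^ 2 ∈ T0) (I0 : Ideal A)
    (h : ∀ t ∈ T0, 1 + t ∉ I0) :
    ∃ (K : Type u) (_ : Field K) (_ : LinearOrder K) (_ : IsStrictOrderedRing K) (θ : A →+* K),
      PolyIVP K ∧ (∀ t ∈ T0, 0 ≤ θ t) ∧ ∀ a ∈ I0, θ a = 0 := by
  obtain ⟨P, hP, hIP, hgood⟩ := exists_good_prime T0 hsq I0 h
  let Ω := AlgebraicClosure (FractionRing (A ⧸ P))
  let ψ : A →+* Ω := (algebraMap (FractionRing (A ⧸ P)) Ω).comp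
    ((algebraMap (A ⧸ P) (FractionRing (A ⧸ P))).comp (Ideal.Quotient.mk P))
  have hψ : ∀ a, ψ a = 0 ↔ a ∈ P := by
    intro a
    have h1 : ψ a = algebraMap (FractionRing (A ⧸ P)) Ω
      (algebraMap (A ⧸ P) (FractionRing (A ⧸ P)) (Ideal.Quotient.mk P a)) := rfl
    rw [h1, _root_.map_eq_zero, IsFractionRing.to_map_eq_zero_iff, Ideal.Quotient.eq_zero_iff_mem]
  have h0 := neg_one_not_mem_cone T0 hsq ψ (fun b hb t ht => by
    rw [← map_pow, ← map_add, Ne, hψ]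
    exact hgood b (fun hb' => hb ((hψ b).2 hb')) t ht)
  obtain ⟨K, hK1, hK2, hK3⟩ := exists_maximal_subfield T0 ψ _ h0
  have hr : ∀ a, ψ a ∈ K := fun a => hK1 (Subfield.subset_closure ⟨a, rfl⟩)
  let T : Subsemiring K := (Cone T0 ψ K).comap K.subtype
  have hT1 : (-1 : K) ∉ T := by
    intro hm
    apply hK2
    have : K.subtype (-1) ∈ Cone T0 ψ K := hm
    simpa using this
  have hTsq : ∀ x : K, x ^ 2 ∈ T := by
    intro x
    have := mul_sq_mem_cone (T0 := T0) (ψ := ψ) (E := K) (one_mem T0) x.2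
    change K.subtype (x ^ 2) ∈ Cone T0 ψ K
    simpa using this
  have H := maximal_adjoin T0 ψ K hr hK3
  have htot := cone_total T hTsq H hT1
  obtain ⟨o, i, hoi⟩ := exists_order T hT1 hTsq htot
  have hTset : (T : Set K) = {c : K | 0 ≤ c} := by
    ext c; exact (hoi c).symm
  refine ⟨K, inferInstance, o, i, ψ.codRestrict K hr, ?_, ?_, ?_⟩
  · apply polyIVP_of_maximal (Ω := Ω)
    rw [← hTset]
    exact H
  · intro t ht
    rw [hoi]
    have := mul_sq_mem_cone (T0 := T0) (ψ := ψ) (E := K) ht (one_mem K)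
    change ψ t ∈ Cone T0 ψ K
    simpa using this
  · intro a ha
    apply Subtype.ext
    exact (hψ a).2 (hIP ha)

end Construction

section Certificates

theorem IsSOS.zero' {n : ℕ} : IsSOS (0 : MvPolynomial (Fin n) ℝ) := ⟨0, Fin.elim0, by simp⟩

theorem IsSOS.sq' {n : ℕ} (g : MvPolynomial (Fin n) ℝ) : IsSOS (g ^ 2) :=
  ⟨1, fun _ => g, by simp⟩

theorem IsSOS.add' {n : ℕ} {p q : MvPolynomial (Fin n) ℝ} (hp : IsSOS p) (hq : IsSOS q) :
    IsSOS (p + q) := by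
  obtain ⟨k, g, rfl⟩ := hp
  obtain ⟨l, g', rfl⟩ := hq
  exact ⟨k + l, Fin.append g g', by rw [Fin.sum_univ_add]; simp⟩

theorem IsSOS.eval_nonneg {n : ℕ} {p : MvPolynomial (Fin n) ℝ} (hp : IsSOS p) (x : Fin n → ℝ) :
    0 ≤ MvPolynomial.eval x p := by
  obtain ⟨k, g, rfl⟩ := hp
  rw [map_sum]
  exact Finset.sum_nonneg (fun i _ => by rw [map_pow]; exact sq_nonneg _)

/-- The monoid of the products `g ^ 2 * ∏ i ∈ B, f i`. -/
def certMonoid {R : Type*} [CommRing R] {m : ℕ} (f : Fin m → R) : Submonoid R where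
  carrier := {x | ∃ (g : R) (B : Finset (Fin m)), x = g ^ 2 * ∏ i ∈ B, f i}
  one_mem' := ⟨1, ∅, by simp⟩
  mul_mem' := by
    rintro _ _ ⟨g, B, rfl⟩ ⟨g', B', rfl⟩
    refine ⟨g * g' * ∏ i ∈ B ∩ B', f i, (B ∪ B') \ (B ∩ B'), ?_⟩
    have h1 := Finset.prod_union_inter (s₁ := B) (s₂ := B') (f := f)
    have h2 := Finset.prod_sdiff (f := f)
      (Finset.inter_subset_left.trans Finset.subset_union_left : B ∩ B' ⊆ B ∪ B')
    calc g ^ 2 * (∏ i ∈ B, f i) * (g' ^ 2 * ∏ i ∈ B', f i)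
        = g ^ 2 * g' ^ 2 * ((∏ i ∈ B, f i) * ∏ i ∈ B', f i) := by ring
      _ = _ := by rw [← h1, ← h2]; ring

theorem cert_of_mem {n m : ℕ} (f : Fin m → MvPolynomial (Fin n) ℝ) {x : MvPolynomial (Fin n) ℝ}
    (hx : x ∈ (certMonoid f).subsemiringClosure) :
    ∃ s : Finset (Fin m) → MvPolynomial (Fin n) ℝ, (∀ B, IsSOS (s B)) ∧
      x = ∑ B : Finset (Fin m), s B * ∏ i ∈ B, f i := by
  classical
  rw [Submonoid.subsemiringClosure_mem] at hx
  induction hx using AddSubmonoid.closure_induction with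
  | mem x hx =>
    obtain ⟨g, B, rfl⟩ := hx
    refine ⟨fun D => if D = B then g ^ 2 else 0, fun D => ?_, by simp⟩
    dsimp only
    split_ifs
    · exact IsSOS.sq' g
    · exact IsSOS.zero'
  | zero => exact ⟨fun _ => 0, fun _ => IsSOS.zero', by simp⟩
  | add x y _ _ hx hy =>
    obtain ⟨s, hs, rfl⟩ := hx
    obtain ⟨s', hs', rfl⟩ := hy
    exact ⟨fun B => s B + s' B, fun B => (hs B).add' (hs' B), by
      simp only [add_mul, Finset.sum_add_distrib]⟩

theorem positivstellensatz_hard {n m p : ℕ}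
    (f : Fin m → MvPolynomial (Fin n) ℝ) (h : Fin p → MvPolynomial (Fin n) ℝ)
    (hX : ∀ x : Fin n → ℝ, (∀ i, 0 ≤ MvPolynomial.eval x (f i)) →
      (∀ j, MvPolynomial.eval x (h j) = 0) → False) :
    ∃ t ∈ (certMonoid f).subsemiringClosure, 1 + t ∈ Ideal.span (Set.range h) := by
  classical
  by_contra hcon
  push Not at hcon
  have hgen : ∀ x ∈ certMonoid f, x ∈ (certMonoid f).subsemiringClosure := fun x hx => by
    rw [Submonoid.subsemiringClosure_mem]
    exact AddSubmonoid.subset_closure hx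
  obtain ⟨K, _, _, _, θ, hK, hT, hI⟩ := exists_real_closed_point
    (certMonoid f).subsemiringClosure (fun a => hgen _ ⟨a, ∅, by simp⟩) _ hcon
  obtain ⟨x, hx⟩ := sign_transfer hK (θ.comp MvPolynomial.C) n
    (Finset.univ.image f ∪ Finset.univ.image h) (fun i => θ (MvPolynomial.X i))
  have hθ : ∀ g, MvPolynomial.eval₂ (θ.comp MvPolynomial.C) (fun i => θ (MvPolynomial.X i)) g =
      θ g := by
    intro g
    have key : MvPolynomial.eval₂Hom (θ.comp MvPolynomial.C) (fun i => θ (MvPolynomial.X i)) = θ := by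
      apply MvPolynomial.ringHom_ext
      · intro r; simp
      · intro i; simp
    exact congrArg (fun F : MvPolynomial (Fin n) ℝ →+* K => F g) key
  refine hX x (fun i => ?_) (fun j => ?_)
  · have h1 := hx (f i) (Finset.mem_union_left _ (Finset.mem_image_of_mem _ (Finset.mem_univ i)))
    rw [hθ] at h1
    have h2 : 0 ≤ θ (f i) := hT _ (hgen _ ⟨1, {i}, by simp⟩)
    rwa [← sign_nonneg_iff, ← h1, sign_nonneg_iff]
  · have h1 := hx (h j) (Finset.mem_union_right _ (Finset.mem_image_of_mem _ (Finset.mem_univ j)))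
    rw [hθ, hI _ (Ideal.subset_span ⟨j, rfl⟩), sign_zero] at h1
    exact sign_eq_zero_iff.1 h1.symm

end Certificates

end Helpers

/-- Stengle's Positivstellensatz: the basic closed semialgebraic
set `{x : fᵢ(x) ≥ 0 ∀i, hⱼ(x) = 0 ∀j}` is empty iff
`-1 = Σⱼ tⱼhⱼ + Σ_{A ⊆ {1,…,m}} s_A ∏_{i ∈ A} fᵢ` for some polynomials `tⱼ` and
sums of squares `s_A` (the `A = ∅` term being the plain SOS `s₀`). -/
theorem stmt13 {n m p : ℕ}
    (f : Fin m → MvPolynomial (Fin n) ℝ) (h : Fin p → MvPolynomial (Fin n) ℝ) :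
    {x : Fin n → ℝ |
        (∀ i, 0 ≤ MvPolynomial.eval x (f i)) ∧ (∀ j, MvPolynomial.eval x (h j) = 0)} = ∅ ↔
    ∃ (t : Fin p → MvPolynomial (Fin n) ℝ)
      (s : Finset (Fin m) → MvPolynomial (Fin n) ℝ),
      (∀ A : Finset (Fin m), IsSOS (s A)) ∧
      (-1 : MvPolynomial (Fin n) ℝ)
        = (∑ j, t j * h j) + ∑ A : Finset (Fin m), s A * ∏ i ∈ A, f i := by
  constructor
  · intro hX
    obtain ⟨t, ht, hm⟩ := positivstellensatz_hard f h (fun x h1 h2 => by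
      have : x ∈ (∅ : Set (Fin n → ℝ)) := by
        rw [← hX]; exact ⟨h1, h2⟩
      exact this)
    obtain ⟨s, hs, e⟩ := cert_of_mem f ht
    obtain ⟨c, hc⟩ := (Ideal.mem_span_range_iff_exists_fun).1 hm
    refine ⟨fun j => -c j, s, hs, ?_⟩
    rw [← e]
    simp only [neg_mul, Finset.sum_neg_distrib, hc]
    ring
  · rintro ⟨t, s, hs, e⟩
    rw [Set.eq_empty_iff_forall_notMem]
    rintro x ⟨h1, h2⟩
    have e' := congrArg (MvPolynomial.eval x) e
    simp only [map_neg, map_one, map_add, map_sum, map_mul, map_prod, h2, mul_zero,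
      Finset.sum_const_zero, zero_add] at e'
    have : 0 ≤ ∑ A : Finset (Fin m), MvPolynomial.eval x (s A) *
        ∏ i ∈ A, MvPolynomial.eval x (f i) :=
      Finset.sum_nonneg (fun A _ => mul_nonneg ((hs A).eval_nonneg x)
        (Finset.prod_nonneg (fun i _ => h1 i)))
    linarith
end
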